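/- Let A ∈ {0,1}^{n×n} be a random symmetric adjacency matrix with zero diagonal such that A_{uv} ~ Bernoulli(P_{uv}) independently for all u > v, where P ∈ [0,1]^{n×n} is symmetric, and set p_max = max over u ≥ v of P_{uv}. Fix τ > 0 and let J = {u ∈ [n] : d_u ≤ τ}, where d_u = Σ_v A_{uv}. For any C' > 0 there exists C > 0 such that, with probability at least 1 − n^{−C'}, ‖A_{JJ} − P_{JJ}‖ ≤ C·(√(n·p_max) + √τ + n·p_max/(√τ + √(n·p_max))), where for a matrix M, M_{JJ} denotes the n×n matrix that agrees with M on entries indexed by J×J and is zero elsewhere. -/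

import Mathlib

open scoped BigOperators
open Filter

namespace SBM

noncomputable section

/-- Adjacency matrices of graphs on `n` nodes. -/
abbrev Adj (n : ℕ) := Fin n → Fin n → Bool

/-- 0/1 real value of an entry of the adjacency matrix. -/
def aVal {n : ℕ} (A : Adj n) (u v : Fin n) : ℝ := if A u v then 1 else 0

/-- Probability weight of one adjacency matrix under the SBM with edge
probability matrix `P`: the entries above the diagonal are independent
Bernoulli, the matrix is symmetric with zero diagonal. -/
def weight {n : ℕ} (P : Matrix (Fin n) (Fin n) ℝ) (A : Adj n) : ℝ :=
  if (∀ u, A u u = false) ∧ (∀ u v, A u v = A v u) then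
    ∏ u : Fin n, ∏ v : Fin n,
      if u < v then (if A u v then P u v else 1 - P u v) else 1
  else 0

/-- Probability of a set of adjacency matrices under the SBM with edge
probability matrix `P`. -/
def prob {n : ℕ} (P : Matrix (Fin n) (Fin n) ℝ) (S : Set (Adj n)) : ℝ :=
  ∑ A : Adj n, S.indicator (weight P) A

/-- The edge probability matrix `P u v = B (σ u) (σ v)`. -/
def pMat {n k : ℕ} (B : Matrix (Fin k) (Fin k) ℝ) (σ : Fin n → Fin k) :
    Matrix (Fin n) (Fin n) ℝ := fun u v => B (σ u) (σ v)

/-- Size of the `i`-th community of a label assignment. -/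
def comSize {n k : ℕ} (σ : Fin n → Fin k) (i : Fin k) : ℝ :=
  ((Finset.univ.filter fun u => σ u = i).card : ℝ)

/-- Hamming loss `ℓ0`. -/
def l0 {n k : ℕ} (σ1 σ2 : Fin n → Fin k) : ℝ :=
  ((Finset.univ.filter fun u => σ1 u ≠ σ2 u).card : ℝ) / n

/-- Misclassification proportion: minimum of `ℓ0` over relabelings. -/
def misclass {n k : ℕ} (σh σ : Fin n → Fin k) : ℝ :=
  ⨅ π : Equiv.Perm (Fin k), l0 σh (fun u => π (σ u))

/-- Euclidean norm of a vector. -/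
def sqnorm {n : ℕ} (x : Fin n → ℝ) : ℝ := Real.sqrt (∑ i, x i ^ 2)

/-- Operator (spectral) norm of a square matrix. -/
def opNorm {n : ℕ} (M : Matrix (Fin n) (Fin n) ℝ) : ℝ :=
  sSup { t : ℝ | ∃ x : Fin n → ℝ, sqnorm x = 1 ∧ t = sqnorm (M.mulVec x) }

/-- The `k`-th largest singular value of a square matrix, via the
Courant–Fischer max-min characterization. -/
def kthSingular {n : ℕ} (M : Matrix (Fin n) (Fin n) ℝ) (k : ℕ) : ℝ :=
  sSup { t : ℝ | 0 ≤ t ∧ ∃ V : Submodule ℝ (Fin n → ℝ),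
    Module.finrank ℝ V = k ∧ ∀ x ∈ V, t * sqnorm x ≤ sqnorm (M.mulVec x) }

/-- The Rényi divergence of order 1/2, `I*`. -/
def renyiHalf (n : ℕ) (a b : ℝ) : ℝ :=
  -2 * Real.log (Real.sqrt ((a / n) * (b / n)) +
    Real.sqrt ((1 - a / n) * (1 - b / n)))

/-- The balanced parameter space `Θ₀(n,k,a,b,β)`. -/
def Theta0 (n k : ℕ) (a b β : ℝ) :
    Set (Matrix (Fin k) (Fin k) ℝ × (Fin n → Fin k)) :=
  { p | (∀ i, (n : ℝ) / (β * k) - 1 ≤ comSize p.2 i ∧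
          comSize p.2 i ≤ β * n / k + 1) ∧
        (∀ i, p.1 i i = a / n) ∧ ∀ i j, i ≠ j → p.1 i j = b / n }

/-- Average of the off-diagonal entries of a `k × k` matrix. -/
def offDiagAvg {k : ℕ} (B : Matrix (Fin k) (Fin k) ℝ) : ℝ :=
  (1 / ((k : ℝ) * ((k : ℝ) - 1))) *
    ∑ i : Fin k, ∑ j : Fin k, if i ≠ j then B i j else 0

/-- The general parameter space `Θ(n,k,a,b,λ,β;α)`. -/
def ThetaGen (n k : ℕ) (a b lam β α : ℝ) :
    Set (Matrix (Fin k) (Fin k) ℝ × (Fin n → Fin k)) :=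
  { p | (∀ i, (n : ℝ) / (β * k) - 1 ≤ comSize p.2 i ∧
          comSize p.2 i ≤ β * n / k + 1) ∧
        (∀ i j, p.1 i j = p.1 j i) ∧
        (∀ i j, 0 ≤ p.1 i j ∧ p.1 i j ≤ 1) ∧
        b / (α * n) ≤ offDiagAvg p.1 ∧
        (∀ i j, i ≠ j → p.1 i j ≤ b / n) ∧
        (∃ i j, i ≠ j ∧ p.1 i j = b / n) ∧
        (∀ i, a / n ≤ p.1 i i) ∧ (∃ i, p.1 i i = a / n) ∧
        (∀ i, p.1 i i ≤ α * a / n) ∧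
        lam ≤ kthSingular (pMat p.1 p.2) k }

/-- The estimated community `C̃ᵢᵘ` (node `u` itself is excluded). -/
def cluster {n k : ℕ} (u : Fin n) (s : Fin n → Fin k) (i : Fin k) :
    Finset (Fin n) :=
  Finset.univ.filter fun v => v ≠ u ∧ s v = i

/-- Number of edges within a set of nodes. -/
def edgesWithin {n : ℕ} (A : Adj n) (C : Finset (Fin n)) : ℝ :=
  (∑ v ∈ C, ∑ w ∈ C, aVal A v w) / 2

/-- Number of edges between two disjoint sets of nodes. -/
def edgesBetween {n : ℕ} (A : Adj n) (C D : Finset (Fin n)) : ℝ :=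
  ∑ v ∈ C, ∑ w ∈ D, aVal A v w

/-- The connectivity estimates `B̂ᵢⱼᵘ` of Algorithm 1, based on the initial
assignment `s = σ⁰ᵤ`. -/
def hatB {n k : ℕ} (A : Adj n) (u : Fin n) (s : Fin n → Fin k) (i j : Fin k) :
    ℝ :=
  if i = j then
    edgesWithin A (cluster u s i) /
      (((cluster u s i).card : ℝ) * (((cluster u s i).card : ℝ) - 1) / 2)
  else
    edgesBetween A (cluster u s i) (cluster u s j) /
      (((cluster u s i).card : ℝ) * ((cluster u s j).card : ℝ))

/-- `â_u = n · minᵢ B̂ᵢᵢᵘ`. -/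
def hata {n k : ℕ} (A : Adj n) (u : Fin n) (s : Fin n → Fin k) : ℝ :=
  n * ⨅ i : Fin k, hatB A u s i i

/-- `b̂_u = n · maxᵢ≠ⱼ B̂ᵢⱼᵘ`. -/
def hatb {n k : ℕ} (A : Adj n) (u : Fin n) (s : Fin n → Fin k) : ℝ :=
  n * sSup { x : ℝ | ∃ i j : Fin k, i ≠ j ∧ x = hatB A u s i j }

/-- `t = ½ log (â (1 − b̂/n) / (b̂ (1 − â/n)))`. -/
def tStat (n : ℕ) (ha hb : ℝ) : ℝ :=
  Real.log (ha * (1 - hb / n) / (hb * (1 - ha / n))) / 2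

/-- `ρ = −(1/(2t)) log (((â/n)e^{−t} + 1 − â/n)/((b̂/n)e^{t} + 1 − b̂/n))`. -/
def rhoStat (n : ℕ) (ha hb t : ℝ) : ℝ :=
  -(Real.log (((ha / n) * Real.exp (-t) + 1 - ha / n) /
      ((hb / n) * Real.exp t + 1 - hb / n))) / (2 * t)

/-- Penalized vote of node `u` for label `l`. -/
def vote {n k : ℕ} (A : Adj n) (u : Fin n) (s : Fin n → Fin k) (ρ : ℝ)
    (l : Fin k) : ℝ :=
  (∑ v ∈ cluster u s l, aVal A u v) - ρ * ((cluster u s l).card : ℝ)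

/-- `lbl` maximizes the penalized vote of node `u`. -/
def VoteMax {n k : ℕ} (A : Adj n) (u : Fin n) (s : Fin n → Fin k) (ρ : ℝ)
    (lbl : Fin k) : Prop :=
  ∀ l : Fin k, vote A u s ρ l ≤ vote A u s ρ lbl

/-- `|{v : σU_{u1}(v) = l} ∩ {v : σU_u(v) = σU_u(u)}|`. -/
def consensusCount {n k : ℕ} (σU : Fin n → Fin n → Fin k) (u1 u : Fin n)
    (l : Fin k) : ℕ :=
  (Finset.univ.filter fun v => σU u1 v = l ∧ σU u v = σU u u).card

/-- Specification of the refinement-plus-consensus scheme of Algorithm 1, with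
an arbitrary family of penalties `ρ`.  `σ0 u` is the initial assignment
`σ⁰ᵤ`, `σU u` is the refined assignment `σ̂ᵤ`, `σhat` is the final output. -/
def RefineSpec {n k : ℕ} (A : Adj n) (σ0 σU : Fin n → Fin n → Fin k)
    (ρ : Fin n → ℝ) (σhat : Fin n → Fin k) : Prop :=
  (∀ u v, v ≠ u → σU u v = σ0 u v) ∧
  (∀ u, VoteMax A u (σ0 u) (ρ u) (σU u u)) ∧
  ∀ hn : 0 < n,
    σhat ⟨0, hn⟩ = σU ⟨0, hn⟩ ⟨0, hn⟩ ∧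
    ∀ u, u ≠ ⟨0, hn⟩ →
      ∀ l : Fin k, consensusCount σU ⟨0, hn⟩ u l ≤
        consensusCount σU ⟨0, hn⟩ u (σhat u)

/-- Algorithm 1 with the standard data-driven penalties. -/
def AlgorithmOne {n k : ℕ} (A : Adj n) (σ0 σU : Fin n → Fin n → Fin k)
    (σhat : Fin n → Fin k) : Prop :=
  RefineSpec A σ0 σU
    (fun u => rhoStat n (hata A u (σ0 u)) (hatb A u (σ0 u))
      (tStat n (hata A u (σ0 u)) (hatb A u (σ0 u)))) σhat

/-- Algorithm 1 with the truncated `t_u` (truncation level `log (2/ε0)`). -/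
def AlgorithmOneTrunc (ε0 : ℝ) {n k : ℕ} (A : Adj n)
    (σ0 σU : Fin n → Fin n → Fin k) (σhat : Fin n → Fin k) : Prop :=
  RefineSpec A σ0 σU
    (fun u => rhoStat n (hata A u (σ0 u)) (hatb A u (σ0 u))
      (min (tStat n (hata A u (σ0 u)) (hatb A u (σ0 u)))
        (Real.log (2 / ε0)))) σhat

/-- Algorithm 1 with known `a` and `b`. -/
def AlgorithmOneKnown (a b : ℝ) {n k : ℕ} (A : Adj n)
    (σ0 σU : Fin n → Fin n → Fin k) (σhat : Fin n → Fin k) : Prop :=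
  RefineSpec A σ0 σU (fun _ => rhoStat n a b (tStat n a b)) σhat

/-- Algorithm 1 with known `a`, `b` and truncated `t_u`. -/
def AlgorithmOneKnownTrunc (a b ε0 : ℝ) {n k : ℕ} (A : Adj n)
    (σ0 σU : Fin n → Fin n → Fin k) (σhat : Fin n → Fin k) : Prop :=
  RefineSpec A σ0 σU
    (fun _ => rhoStat n a b (min (tStat n a b) (Real.log (2 / ε0)))) σhat

/-- The initializer `σ0 A u` (that is, `σ⁰ᵤ`) only uses the data `A₋ᵤ`. -/
def LocalInit {n k : ℕ} (σ0 : Adj n → Fin n → Fin n → Fin k) : Prop :=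
  ∀ (A A' : Adj n) (u : Fin n),
    (∀ v w, v ≠ u → w ≠ u → A v w = A' v w) → σ0 A u = σ0 A' u

/-- Condition 1: the initializer is, with probability at least
`1 − C0 n^{−(1+δ)}`, within misclassification proportion `γ` of the truth,
uniformly over the parameter space and the left-out node. -/
def Condition1 {n k : ℕ}
    (Θ : Set (Matrix (Fin k) (Fin k) ℝ × (Fin n → Fin k)))
    (σ0 : Adj n → Fin n → Fin n → Fin k) (C0 δ γ : ℝ) : Prop :=
  ∀ p ∈ Θ, ∀ u : Fin n,
    1 - C0 * (n : ℝ) ^ (-(1 + δ)) ≤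
      prob (pMat p.1 p.2) { A | misclass p.2 (σ0 A u) ≤ γ }

/-- Degree of a node. -/
def degree {n : ℕ} (A : Adj n) (u : Fin n) : ℝ := ∑ v, aVal A u v

/-- Average degree `d̄`. -/
def avgDeg {n : ℕ} (A : Adj n) : ℝ := (∑ u, degree A u) / n

/-- Trimming operator `T_τ`: zero out rows/columns of high-degree nodes. -/
def trim {n : ℕ} (A : Adj n) (τ : ℝ) : Matrix (Fin n) (Fin n) ℝ :=
  fun u v => if τ ≤ degree A u ∨ τ ≤ degree A v then 0 else aVal A u v

/-- Regularized adjacency matrix `A_τ = A + (τ/n)·11ᵀ`. -/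
def addReg {n : ℕ} (A : Adj n) (τ : ℝ) : Matrix (Fin n) (Fin n) ℝ :=
  fun u v => aVal A u v + τ / n

/-- Normalized Laplacian `L(M)_{uv} = M_{uv}/√(r_u r_v)`. -/
def lap {n : ℕ} (M : Matrix (Fin n) (Fin n) ℝ) : Matrix (Fin n) (Fin n) ℝ :=
  fun u v => M u v / Real.sqrt ((∑ w, M u w) * (∑ w, M v w))

/-- `U` is a matrix whose columns are orthonormal eigenvectors of `M`
corresponding to the `k` leading (largest in absolute value) eigenvalues. -/
def LeadingEigenvectors {n k : ℕ} (M : Matrix (Fin n) (Fin n) ℝ)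
    (U : Matrix (Fin n) (Fin k) ℝ) : Prop :=
  ∃ μ : Fin k → ℝ,
    (∀ i j : Fin k, (∑ u, U u i * U u j) = if i = j then (1 : ℝ) else 0) ∧
    (∀ j : Fin k, M.mulVec (fun u => U u j) = fun u => μ j * U u j) ∧
    ∀ (x : Fin n → ℝ) (c : ℝ), M.mulVec x = (fun u => c * x u) →
      (∀ j, (∑ u, x u * U u j) = 0) → x ≠ 0 → ∀ j, |c| ≤ |μ j|

/-- Distance between two rows of `U`. -/
def rowDist {n k : ℕ} (U : Matrix (Fin n) (Fin k) ℝ) (v w : Fin n) : ℝ :=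
  Real.sqrt (∑ j, (U v j - U w j) ^ 2)

/-- Number of points of `S` within distance `r` of `v`. -/
def ballCount {n k : ℕ} (U : Matrix (Fin n) (Fin k) ℝ) (r : ℝ)
    (S : Finset (Fin n)) (v : Fin n) : ℕ :=
  (S.filter fun w => rowDist U w v < r).card

/-- Specification of the greedy clustering scheme (Algorithm 2) with critical
radius `r`, applied to the rows of `U`. -/
def GreedyCluster {n k : ℕ} (U : Matrix (Fin n) (Fin k) ℝ) (r : ℝ)
    (σhat : Fin n → Fin k) : Prop :=
  ∃ (S : ℕ → Finset (Fin n)) (t : Fin k → Fin n) (Ch : Fin k → Finset (Fin n)),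
    S 0 = Finset.univ ∧
    (∀ i : Fin k,
      ((S i.val).Nonempty → t i ∈ S i.val ∧
        ∀ v ∈ S i.val,
          ballCount U r (S i.val) v ≤ ballCount U r (S i.val) (t i)) ∧
      Ch i = (S i.val).filter (fun v => rowDist U v (t i) < r) ∧
      S (i.val + 1) = S i.val \ Ch i) ∧
    (∀ i : Fin k, ∀ u ∈ Ch i, σhat u = i) ∧
    ∀ u ∈ S k, ∀ j : Fin k,
      (∑ v ∈ Ch (σhat u), rowDist U u v) / ((Ch (σhat u)).card : ℝ) ≤
        (∑ v ∈ Ch j, rowDist U u v) / ((Ch j).card : ℝ)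

/-- `σhat` is a possible output of `USC(τ)` (with tuning constant `μ`). -/
def USCOutput {n k : ℕ} (A : Adj n) (τ μ : ℝ) (σhat : Fin n → Fin k) : Prop :=
  ∃ U : Matrix (Fin n) (Fin k) ℝ,
    LeadingEigenvectors (trim A τ) U ∧
    GreedyCluster U (μ * Real.sqrt ((k : ℝ) / n)) σhat

/-- `σhat` is a possible output of `NSC(τ)` (with tuning constant `μ`). -/
def NSCOutput {n k : ℕ} (A : Adj n) (τ μ : ℝ) (σhat : Fin n → Fin k) : Prop :=
  ∃ U : Matrix (Fin n) (Fin k) ℝ,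
    LeadingEigenvectors (lap (addReg A τ)) U ∧
    GreedyCluster U (μ * Real.sqrt ((k : ℝ) / n)) σhat

/-- The initializer `σ0 A u` is obtained by applying `USC(Cτ · d̄)` to the
leave-one-out matrix `A₋ᵤ` (identified with a graph on `n − 1` nodes via an
injection `e` avoiding `u`). -/
def USCInitDeg {n k : ℕ} (Cτ μ : ℝ) (σ0 : Adj n → Fin n → Fin n → Fin k) :
    Prop :=
  ∀ (A : Adj n) (u : Fin n), ∃ (m : ℕ) (e : Fin m → Fin n) (s' : Fin m → Fin k),
    m + 1 = n ∧ Function.Injective e ∧ (∀ w, e w ≠ u) ∧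
    USCOutput (fun v w => A (e v) (e w))
      (Cτ * avgDeg (fun v w => A (e v) (e w))) μ s' ∧
    ∀ w, σ0 A u (e w) = s' w

/-- The initializer `σ0 A u` is obtained by applying `NSC(Cτ · d̄)` to `A₋ᵤ`. -/
def NSCInitDeg {n k : ℕ} (Cτ μ : ℝ) (σ0 : Adj n → Fin n → Fin n → Fin k) :
    Prop :=
  ∀ (A : Adj n) (u : Fin n), ∃ (m : ℕ) (e : Fin m → Fin n) (s' : Fin m → Fin k),
    m + 1 = n ∧ Function.Injective e ∧ (∀ w, e w ≠ u) ∧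
    NSCOutput (fun v w => A (e v) (e w))
      (Cτ * avgDeg (fun v w => A (e v) (e w))) μ s' ∧
    ∀ w, σ0 A u (e w) = s' w

/-- The initializer `σ0 A u` is obtained by applying `USC(τ)` (with a fixed
regularization level `τ`) to `A₋ᵤ`. -/
def USCInitTau {n k : ℕ} (τ μ : ℝ) (σ0 : Adj n → Fin n → Fin n → Fin k) :
    Prop :=
  ∀ (A : Adj n) (u : Fin n), ∃ (m : ℕ) (e : Fin m → Fin n) (s' : Fin m → Fin k),
    m + 1 = n ∧ Function.Injective e ∧ (∀ w, e w ≠ u) ∧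
    USCOutput (fun v w => A (e v) (e w)) τ μ s' ∧
    ∀ w, σ0 A u (e w) = s' w

/-- The initializer `σ0 A u` is obtained by applying `NSC(τ)` (with a fixed
regularization level `τ`) to `A₋ᵤ`. -/
def NSCInitTau {n k : ℕ} (τ μ : ℝ) (σ0 : Adj n → Fin n → Fin n → Fin k) :
    Prop :=
  ∀ (A : Adj n) (u : Fin n), ∃ (m : ℕ) (e : Fin m → Fin n) (s' : Fin m → Fin k),
    m + 1 = n ∧ Function.Injective e ∧ (∀ w, e w ≠ u) ∧
    NSCOutput (fun v w => A (e v) (e w)) τ μ s' ∧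
    ∀ w, σ0 A u (e w) = s' w

/-- The minimax-rate threshold `exp(−(1−coef)·n·I*/2)` for `k = 2` and
`exp(−(1−coef)·n·I*/(βk))` for `k ≥ 3`. -/
def rate (β : ℝ) (n k : ℕ) (a b coef : ℝ) : ℝ :=
  if k = 2 then Real.exp (-((1 - coef) * ((n : ℝ) * renyiHalf n a b)) / 2)
  else Real.exp (-((1 - coef) * ((n : ℝ) * renyiHalf n a b)) / (β * k))

/-- `sup_{(B,σ)∈Θ₀} P{ℓ(σ,σ̂) ≥ rate} → 0` as `n → ∞`. -/
def SupSmall0 (β : ℝ) (k : ℕ → ℕ) (a b coef : ℕ → ℝ)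
    (σhat : ∀ n, Adj n → Fin n → Fin (k n)) : Prop :=
  ∀ ε' : ℝ, 0 < ε' → ∀ᶠ n in atTop,
    ∀ p ∈ Theta0 n (k n) (a n) (b n) β,
      prob (pMat p.1 p.2)
        { A | rate β n (k n) (a n) (b n) (coef n) ≤ misclass (σhat n A) p.2 }
        ≤ ε'

/-- `sup_{(B,σ)∈Θ} P{ℓ(σ,σ̂) ≥ rate} → 0` as `n → ∞`. -/
def SupSmallGen (β α : ℝ) (k : ℕ → ℕ) (a b lam coef : ℕ → ℝ)
    (σhat : ∀ n, Adj n → Fin n → Fin (k n)) : Prop :=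
  ∀ ε' : ℝ, 0 < ε' → ∀ᶠ n in atTop,
    ∀ p ∈ ThetaGen n (k n) (a n) (b n) (lam n) β α,
      prob (pMat p.1 p.2)
        { A | rate β n (k n) (a n) (b n) (coef n) ≤ misclass (σhat n A) p.2 }
        ≤ ε'

/-- The running assumption `0 < b < a ≤ (1−ε) n`. -/
def Baseline (ε : ℝ) (n : ℕ) (a b : ℝ) : Prop :=
  0 < b ∧ b < a ∧ a ≤ (1 - ε) * n

/-- `a ≍ b`. -/
def Comparable (a b : ℕ → ℝ) : Prop :=
  ∃ c1 c2 : ℝ, 0 < c1 ∧ ∀ n, c1 * b n ≤ a n ∧ a n ≤ c2 * b n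

/-- The constant `C_ε`. -/
def Ceps (ε : ℝ) : ℝ := (10 / 3) * ((2 - ε) / ((ε / 2) * Real.log (2 / ε)))

/-- The constant `c_ε`. -/
def ceps (ε : ℝ) : ℝ := min (1 / (10 * Ceps ε)) (ε / (2 - ε))

/-- The maximal entry `p_max` of a matrix. -/
def pmax {n : ℕ} (P : Matrix (Fin n) (Fin n) ℝ) : ℝ :=
  sSup { x : ℝ | ∃ u v, x = P u v }

/-- The matrix agreeing with `M` on `J × J` and zero elsewhere. -/
def restrictM {n : ℕ} (M : Matrix (Fin n) (Fin n) ℝ) (J : Finset (Fin n)) :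
    Matrix (Fin n) (Fin n) ℝ :=
  fun u v => if u ∈ J ∧ v ∈ J then M u v else 0

/-- The real-valued adjacency matrix. -/
def adjMat {n : ℕ} (A : Adj n) : Matrix (Fin n) (Fin n) ℝ := fun u v => aVal A u v

end

end SBM

namespace SBM

open Filter

/-!
By discretizing the unit ball at scale `1 / √n`, the operator norm of an `n × n` matrix `M` is
at most a constant times the maximum of `∑ M u v * z u * w v / n` over integer vectors `z`, `w` of
norm `O(√n)`, of which there are only `exp (O(n))`. Let `M` be the low-degree block of `A - P`, put
`D = √(n * pmax P) + √τ`, and split each form at the threshold `|z u * w v| = 16 * D`.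

* The light part, centered at its mean, has variance `O(D ^ 2 * n)` and terms `O(D)`, so it is
  `O(n * D)` outside an event of probability `exp (-K * n)`, which survives the union bound over the
  lattice points.
* The mean of the heavy part is `O(n * D)`, since a term beyond the threshold is at most its square
  divided by `16 * D`.
* The heavy part itself is summed over dyadic levels `|z u| ≈ 2 ^ i`, `|w v| ≈ 2 ^ j`. With high
  probability no pair of vertex sets spans many more edges than expected. This controls the pairs
  of levels with `2 ^ i` and `2 ^ j` within a factor `D` of each other; for the other pairs the
  degree bound `D ^ 2` gives a geometric series.
-/

section

open Finset Real

theorem sum_pow_filter_le {g Y : ℝ} (hg : 1 < g) (hY : 0 ≤ Y) (N : ℕ) :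
    ∑ i ∈ range N with g ^ i ≤ Y, g ^ i ≤ g / (g - 1) * Y := by
  have : 0 < g - 1 := sub_pos.2 hg
  induction N with
  | zero => simp only [range_zero, filter_empty, sum_empty]; positivity
  | succ N ih =>
    by_cases h : g ^ N ≤ Y
    · calc ∑ i ∈ range (N + 1) with g ^ i ≤ Y, g ^ i
          ≤ ∑ i ∈ range (N + 1), g ^ i :=
            sum_le_sum_of_subset_of_nonneg (filter_subset _ _) fun _ _ _ ↦ by positivity
        _ = (g * g ^ N - 1) / (g - 1) := by rw [geom_sum_eq hg.ne', pow_succ']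
        _ ≤ g / (g - 1) * g ^ N := by rw [div_mul_eq_mul_div]; gcongr; linarith
        _ ≤ g / (g - 1) * Y := by gcongr
    · rwa [range_add_one, filter_insert, if_neg h]

theorem sum_sqrt_two_pow_div_le {Y : ℝ} (hY : 0 < Y) (N : ℕ) :
    ∑ i ∈ range N with (2 : ℝ) ^ i ≤ Y, √(2 ^ i / Y) ≤ 4 := by
  have h2 : 4 / 3 ≤ √2 := le_sqrt_of_sq_le (by norm_num)
  have hY' : 0 < √Y := sqrt_pos.2 hY
  have hpow (i : ℕ) : √(2 ^ i) = √2 ^ i :=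
    (sqrt_eq_iff_mul_self_eq (by positivity) (by positivity)).2 <| by
      rw [← mul_pow, mul_self_sqrt zero_le_two]
  calc ∑ i ∈ range N with (2 : ℝ) ^ i ≤ Y, √(2 ^ i / Y)
      = (∑ i ∈ range N with √2 ^ i ≤ √Y, √2 ^ i) / √Y := by
        simp only [sum_div, ← hpow, sqrt_le_sqrt_iff hY.le, sqrt_div (pow_nonneg zero_le_two _)]
    _ ≤ √2 / (√2 - 1) * √Y / √Y := by
        gcongr
        exact sum_pow_filter_le (by linarith) hY'.le N
    _ = √2 / (√2 - 1) := by field_simp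
    _ ≤ 4 := (div_le_iff₀ (by linarith)).2 (by linarith)

theorem sum_inv_four_pow_le (N : ℕ) : ∑ i ∈ range N, ((4 : ℝ) ^ i)⁻¹ ≤ 2 := by
  have h : (0 : ℝ) ≤ 4⁻¹ ^ N := by positivity
  calc ∑ i ∈ range N, ((4 : ℝ) ^ i)⁻¹ = (4⁻¹ ^ N - 1) / (4⁻¹ - 1) := by
        simp only [← inv_pow]
        exact geom_sum_eq (by norm_num) N
    _ ≤ 2 := by rw [div_le_iff_of_neg (by norm_num)]; linarith

theorem four_pow_eq_mul_self (k : ℕ) : (4 : ℝ) ^ k = 2 ^ k * 2 ^ k := by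
  rw [← mul_pow]; norm_num

theorem mul_one_sub_log_le {r : ℝ} (hr : 0 < r) : r * (1 - log r) ≤ 2 * √r := by
  have hs : 0 < √r := sqrt_pos.2 hr
  have h : -(log r / 2) ≤ (√r)⁻¹ - 1 := by
    simpa only [log_inv, log_sqrt hr.le] using log_le_sub_one_of_pos (inv_pos.2 hs)
  calc r * (1 - log r) ≤ r * (2 * (√r)⁻¹) := by gcongr; linarith
    _ = 2 * √r := by rw [mul_left_comm, ← div_eq_mul_inv, div_sqrt]

/-- The entropy `t (1 + log (n / t))`, an upper bound for `log (n.choose t)`. -/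
noncomputable def entropyBound (n t : ℝ) : ℝ := t * (1 + log (n / t))

theorem entropyBound_zero (n : ℝ) : entropyBound n 0 = 0 := zero_mul _

theorem entropyBound_le {n t a : ℝ} (hn : 0 < n) (ht : 0 ≤ t) (ha : 0 < a) :
    entropyBound n t ≤ 2 * (t * log a) + n / a ^ 2 := by
  obtain rfl | ht := ht.eq_or_lt
  · simp only [entropyBound_zero, zero_mul, mul_zero, zero_add]; positivity
  have hlog : log (n / t) = 2 * log a + log (n / (t * a ^ 2)) := by
    rw [log_div hn.ne' ht.ne', log_div hn.ne' (mul_pos ht (pow_pos ha 2)).ne',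
      log_mul ht.ne' (pow_pos ha 2).ne', log_pow]
    push_cast; ring
  calc entropyBound n t = t * (1 + 2 * log a + log (n / (t * a ^ 2))) := by
        rw [entropyBound, hlog]; ring
    _ ≤ t * (1 + 2 * log a + (n / (t * a ^ 2) - 1)) := by
        gcongr; exact log_le_sub_one_of_pos (by positivity)
    _ = 2 * (t * log a) + n / a ^ 2 := by field_simp; ring

theorem mul_entropyBound_le {n t a r : ℝ} (hn : 0 < n) (ht : 0 ≤ t) (hr : 0 < r) (hr₁ : r ≤ 1)
    (hra : 1 ≤ r * a) :
    r * a * entropyBound n t ≤ 2 * √r * (2 * (a * t) + n / a) * (1 + log (r * a)) := by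
  have ha : 1 ≤ a := hra.trans (mul_le_of_le_one_left
    (pos_of_mul_pos_right (one_pos.trans_le hra) hr.le).le hr₁)
  have ha₀ : 0 < a := one_pos.trans_le ha
  have hlog : 1 + log a ≤ (1 - log r) * (1 + log (r * a)) := by
    nlinarith [mul_nonneg (neg_nonneg.2 (log_nonpos hr.le hr₁)) (log_nonneg hra),
      log_mul hr.ne' ha₀.ne']
  have hloga : 0 ≤ log a := log_nonneg ha
  have hlogra : 0 ≤ log (r * a) := log_nonneg hra
  calc r * a * entropyBound n t ≤ r * a * (2 * (t * log a) + n / a ^ 2) := by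
        gcongr; exact entropyBound_le hn ht ha₀
    _ ≤ r * a * ((2 * t + n / a ^ 2) * (1 + log a)) := by
        gcongr
        have : 0 ≤ n / a ^ 2 := by positivity
        nlinarith
    _ ≤ r * a * ((2 * t + n / a ^ 2) * ((1 - log r) * (1 + log (r * a)))) := by gcongr
    _ = r * (1 - log r) * ((2 * (a * t) + n / a) * (1 + log (r * a))) := by field_simp
    _ ≤ 2 * √r * ((2 * (a * t) + n / a) * (1 + log (r * a))) := by
        exact mul_le_mul_of_nonneg_right (mul_one_sub_log_le hr) (by positivity)
    _ = _ := by ring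

theorem two_pow_mul_entropyBound_le {n t D : ℝ} (hn : 0 < n) (ht : 0 ≤ t) (hD : 0 < D)
    {i j : ℕ} (hij : 2 ^ i ≤ D * 2 ^ j) (hD' : D ≤ 2 ^ (i + j)) :
    2 ^ (i + j) * entropyBound n t ≤ 2 * D * √(2 ^ i / (D * 2 ^ j)) *
      (2 * (4 ^ j * t) + n / 4 ^ j) * (1 + log (2 ^ (i + j) / D)) := by
  have hq : 2 ^ i / (D * 2 ^ j) * 4 ^ j = 2 ^ (i + j) / D := by
    rw [four_pow_eq_mul_self, pow_add]; field_simp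
  have h := mul_entropyBound_le (a := 4 ^ j) hn ht (by positivity)
    ((div_le_one (by positivity)).2 hij) (hq ▸ (one_le_div hD).2 hD')
  rw [hq] at h
  calc 2 ^ (i + j) * entropyBound n t = D * (2 ^ (i + j) / D * entropyBound n t) := by field_simp
    _ ≤ _ := mul_le_mul_of_nonneg_left h hD.le
    _ = _ := by ring

section Counting

variable {n s : ℕ}

theorem one_add_log_le_entropyBound (hs : 0 < s) (hsn : s ≤ n) :
    1 + log n ≤ entropyBound n s := by
  have hs₁ : (1 : ℝ) ≤ s := by exact_mod_cast hs
  have hsn' : (s : ℝ) ≤ n := by exact_mod_cast hsn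
  have hn : (0 : ℝ) < n := by linarith
  have h₁ : log s ≤ s - 1 := log_le_sub_one_of_pos (by linarith)
  have h₂ : log s ≤ log n := log_le_log (by linarith) hsn'
  rw [entropyBound, log_div hn.ne' (by linarith)]
  nlinarith [log_nonneg hs₁]

theorem entropyBound_nonneg (hsn : s ≤ n) : 0 ≤ entropyBound n s := by
  obtain rfl | hs := s.eq_zero_or_pos
  · rw [Nat.cast_zero, entropyBound_zero]
  · exact (by have := log_natCast_nonneg n; positivity : 0 ≤ 1 + log n).trans
      (one_add_log_le_entropyBound hs hsn)

theorem choose_le_exp_entropyBound (hs : 0 < s) (hsn : s ≤ n) :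
    (n.choose s : ℝ) ≤ exp (entropyBound n s) := by
  have hs₀ : (0 : ℝ) < s := by exact_mod_cast hs
  have hn₀ : (0 : ℝ) < n := hs₀.trans_le (by exact_mod_cast hsn)
  calc (n.choose s : ℝ) ≤ n ^ s / s.factorial := Nat.choose_le_pow_div s n
    _ = (s : ℝ) ^ s / s.factorial * (n / s) ^ s := by
        rw [div_pow]; field_simp
    _ ≤ exp s * (n / s) ^ s := by
        gcongr; exact pow_div_factorial_le_exp s hs₀.le s
    _ = exp (entropyBound n s) := by
        rw [entropyBound, mul_add, mul_one, exp_add, mul_comm (s : ℝ) (log _), exp_mul,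
          exp_log (by positivity), rpow_natCast]

theorem choose_mul_exp_neg_entropyBound_le {c : ℝ} (hc : 1 ≤ c) (hs : 0 < s) (hsn : s ≤ n) :
    n.choose s * exp (-(c * entropyBound n s)) ≤ exp (-((c - 1) * (1 + log n))) :=
  calc n.choose s * exp (-(c * entropyBound n s))
      ≤ exp (entropyBound n s) * exp (-(c * entropyBound n s)) := by
        gcongr; exact choose_le_exp_entropyBound hs hsn
    _ = exp (-((c - 1) * entropyBound n s)) := by rw [← exp_add]; ring_nf
    _ ≤ exp (-((c - 1) * (1 + log n))) := by
        gcongr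
        exact one_add_log_le_entropyBound hs hsn

theorem sum_exp_neg_entropyBound_le {ι : Type*} [Fintype ι] {c : ℝ} (hc : 1 ≤ c) :
    ∑ S : Finset ι with S.Nonempty, exp (-(c * entropyBound (Fintype.card ι) #S)) ≤
      exp (-((c - 2) * (1 + log (Fintype.card ι)))) := by
  set n := Fintype.card ι
  calc ∑ S : Finset ι with S.Nonempty, exp (-(c * entropyBound n #S))
      = ∑ S ∈ (univ : Finset ι).powerset,
          if #S = 0 then 0 else exp (-(c * entropyBound n #S)) := by
        simp only [powerset_univ, sum_filter, ← card_pos, Nat.pos_iff_ne_zero, ite_not]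
    _ = ∑ s ∈ range n, n.choose (s + 1) * exp (-(c * entropyBound n (s + 1 : ℕ))) := by
        rw [sum_powerset_apply_card
            (fun s ↦ if s = 0 then 0 else exp (-(c * entropyBound n s))), card_univ,
          sum_range_succ']
        simp [n]
    _ ≤ ∑ _s ∈ range n, exp (-((c - 1) * (1 + log n))) :=
        sum_le_sum fun s hs ↦
          choose_mul_exp_neg_entropyBound_le hc s.succ_pos (mem_range.1 hs)
    _ = n * exp (-((c - 1) * (1 + log n))) := by rw [sum_const, card_range, nsmul_eq_mul]
    _ ≤ exp (1 + log n) * exp (-((c - 1) * (1 + log n))) := by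
        gcongr
        exact (le_exp_log _).trans (exp_le_exp.2 (by linarith))
    _ = exp (-((c - 2) * (1 + log n))) := by rw [← exp_add]; ring_nf

end Counting

section Levels

variable {n D : ℝ} {N : ℕ} {s t : ℕ → ℝ} {e : ℕ → ℕ → ℝ}

theorem sum_row_regime_le (hD : 0 < D) (hs : ∀ i, 0 ≤ s i) (hes : ∀ i j, e i j ≤ D ^ 2 * s i) :
    ∑ i ∈ range N, ∑ j ∈ range N with D * 2 ^ j ≤ 2 ^ i, 2 ^ (i + j) * e i j ≤
      2 * D * ∑ i ∈ range N, 4 ^ i * s i := by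
  rw [mul_sum]
  refine sum_le_sum fun i _ ↦ ?_
  have hsi := hs i
  calc ∑ j ∈ range N with D * 2 ^ j ≤ 2 ^ i, 2 ^ (i + j) * e i j
      ≤ ∑ j ∈ range N with D * 2 ^ j ≤ 2 ^ i, 2 ^ (i + j) * (D ^ 2 * s i) :=
        sum_le_sum fun j _ ↦ mul_le_mul_of_nonneg_left (hes i j) (by positivity)
    _ = 2 ^ i * (D ^ 2 * s i) * ∑ j ∈ range N with 2 ^ j ≤ 2 ^ i / D, 2 ^ j := by
        simp only [mul_sum, le_div_iff₀' hD]
        exact sum_congr rfl fun j _ ↦ by ring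
    _ ≤ 2 ^ i * (D ^ 2 * s i) * (2 / (2 - 1) * (2 ^ i / D)) := by
        gcongr
        exact sum_pow_filter_le one_lt_two (by positivity) N
    _ = 2 * D * (4 ^ i * s i) := by
        rw [four_pow_eq_mul_self]; field_simp; ring

theorem sum_entropy_regime_le (hn : 0 ≤ n) (hD : 0 < D) (ht : ∀ j, 0 ≤ t j) :
    ∑ i ∈ range N, ∑ j ∈ range N with 2 ^ i ≤ D * 2 ^ j,
        2 * D * √(2 ^ i / (D * 2 ^ j)) * (2 * (4 ^ j * t j) + n / 4 ^ j) ≤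
      16 * D * (∑ j ∈ range N, 4 ^ j * t j + n) := by
  have hcol (j : ℕ) : ∑ i ∈ range N with 2 ^ i ≤ D * 2 ^ j,
      2 * D * √(2 ^ i / (D * 2 ^ j)) * (2 * (4 ^ j * t j) + n / 4 ^ j) ≤
        8 * D * (2 * (4 ^ j * t j) + n * (4 ^ j)⁻¹) := by
    have htj := ht j
    rw [← sum_mul, ← mul_sum]
    calc _ ≤ 2 * D * 4 * (2 * (4 ^ j * t j) + n / 4 ^ j) := by
          gcongr
          exact sum_sqrt_two_pow_div_le (by positivity) N
      _ = _ := by ring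
  calc _ = ∑ j ∈ range N, ∑ i ∈ range N with 2 ^ i ≤ D * 2 ^ j,
        2 * D * √(2 ^ i / (D * 2 ^ j)) * (2 * (4 ^ j * t j) + n / 4 ^ j) := by
        simp only [sum_filter]; exact sum_comm
    _ ≤ ∑ j ∈ range N, 8 * D * (2 * (4 ^ j * t j) + n * (4 ^ j)⁻¹) := sum_le_sum fun j _ ↦ hcol j
    _ = 8 * D * (2 * ∑ j ∈ range N, 4 ^ j * t j + n * ∑ j ∈ range N, (4 ^ j)⁻¹) := by
        simp only [← mul_sum, sum_add_distrib]
    _ ≤ 8 * D * (2 * ∑ j ∈ range N, 4 ^ j * t j + n * 2) := by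
        gcongr; exact sum_inv_four_pow_le N
    _ = _ := by ring

theorem balanced_block_le {c s t e : ℝ} {i j : ℕ} (hn : 0 < n) (hD : 0 < D) (hc : 0 ≤ c)
    (hs : 0 ≤ s) (ht : 0 ≤ t) (hij : 2 ^ i ≤ D * 2 ^ j) (hji : 2 ^ j ≤ D * 2 ^ i)
    (hq : D ≤ 2 ^ (i + j))
    (hdisc : (1 + log (2 ^ (i + j) / D)) * e ≤ exp 1 * (2 ^ (i + j) / D) * (D ^ 2 / n * s * t) +
      c * (entropyBound n s + entropyBound n t)) :
    2 ^ (i + j) * e ≤ exp 1 * D / n * ((4 ^ i * s) * (4 ^ j * t)) +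
      c * (2 * D * √(2 ^ j / (D * 2 ^ i)) * (2 * (4 ^ i * s) + n / 4 ^ i) +
        2 * D * √(2 ^ i / (D * 2 ^ j)) * (2 * (4 ^ j * t) + n / 4 ^ j)) := by
  have hlog : 0 ≤ log (2 ^ (i + j) / D) := log_nonneg ((one_le_div hD).2 hq)
  have hEs := two_pow_mul_entropyBound_le hn hs hD hji (by rwa [add_comm])
  have hEt := two_pow_mul_entropyBound_le hn ht hD hij hq
  rw [add_comm j] at hEs
  have hmean : 2 ^ (i + j) * (exp 1 * (2 ^ (i + j) / D) * (D ^ 2 / n * s * t)) =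
      exp 1 * D / n * ((4 ^ i * s) * (4 ^ j * t)) := by
    rw [four_pow_eq_mul_self, four_pow_eq_mul_self, pow_add]; field_simp
  set L := 1 + log (2 ^ (i + j) / D)
  have hL : 1 ≤ L := le_add_of_nonneg_right hlog
  refine le_of_mul_le_mul_right ?_ (one_pos.trans_le hL)
  calc 2 ^ (i + j) * e * L = 2 ^ (i + j) * (L * e) := by ring
    _ ≤ 2 ^ (i + j) * (exp 1 * (2 ^ (i + j) / D) * (D ^ 2 / n * s * t) +
          c * (entropyBound n s + entropyBound n t)) := by gcongr
    _ = exp 1 * D / n * ((4 ^ i * s) * (4 ^ j * t)) +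
          c * (2 ^ (i + j) * entropyBound n s + 2 ^ (i + j) * entropyBound n t) := by
        rw [← hmean]; ring
    _ ≤ exp 1 * D / n * ((4 ^ i * s) * (4 ^ j * t)) * L +
          c * (2 * D * √(2 ^ j / (D * 2 ^ i)) * (2 * (4 ^ i * s) + n / 4 ^ i) * L +
            2 * D * √(2 ^ i / (D * 2 ^ j)) * (2 * (4 ^ j * t) + n / 4 ^ j) * L) := by
        refine add_le_add (le_mul_of_one_le_right (by positivity) hL) ?_
        gcongr
    _ = _ := by ring

theorem heavy_block_le {c s t e : ℝ} {i j : ℕ} (hn : 0 < n) (hD : 0 < D) (hc : 0 ≤ c)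
    (hs : 0 ≤ s) (ht : 0 ≤ t) (he : 0 ≤ e)
    (hdisc : D ≤ 2 ^ (i + j) → (1 + log (2 ^ (i + j) / D)) * e ≤
      exp 1 * (2 ^ (i + j) / D) * (D ^ 2 / n * s * t) +
        c * (entropyBound n s + entropyBound n t)) :
    (if D ≤ 2 ^ (i + j) then 2 ^ (i + j) * e else 0) ≤
      (if D * 2 ^ j ≤ 2 ^ i then 2 ^ (i + j) * e else 0) +
      (if D * 2 ^ i ≤ 2 ^ j then 2 ^ (i + j) * e else 0) +
      exp 1 * D / n * ((4 ^ i * s) * (4 ^ j * t)) +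
      c * ((if 2 ^ j ≤ D * 2 ^ i then
          2 * D * √(2 ^ j / (D * 2 ^ i)) * (2 * (4 ^ i * s) + n / 4 ^ i) else 0) +
        (if 2 ^ i ≤ D * 2 ^ j then
          2 * D * √(2 ^ i / (D * 2 ^ j)) * (2 * (4 ^ j * t) + n / 4 ^ j) else 0)) := by
  have hmean : 0 ≤ exp 1 * D / n * ((4 ^ i * s) * (4 ^ j * t)) := by positivity
  have hent : 0 ≤ c * ((if 2 ^ j ≤ D * 2 ^ i then
        2 * D * √(2 ^ j / (D * 2 ^ i)) * (2 * (4 ^ i * s) + n / 4 ^ i) else 0) +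
      (if 2 ^ i ≤ D * 2 ^ j then
        2 * D * √(2 ^ i / (D * 2 ^ j)) * (2 * (4 ^ j * t) + n / 4 ^ j) else 0)) := by
    refine mul_nonneg hc (add_nonneg ?_ ?_) <;> split_ifs <;> positivity
  have hblock : 0 ≤ 2 ^ (i + j) * e := by positivity
  by_cases hq : D ≤ 2 ^ (i + j)
  swap
  · rw [if_neg hq]; split_ifs at hent ⊢ <;> linarith
  by_cases hi : D * 2 ^ j ≤ 2 ^ i
  · rw [if_pos hq, if_pos hi]; split_ifs at hent ⊢ <;> linarith
  by_cases hj : D * 2 ^ i ≤ 2 ^ j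
  · rw [if_pos hq, if_pos hj]; split_ifs at hent ⊢ <;> linarith
  have hij := (not_le.1 hi).le
  have hji := (not_le.1 hj).le
  rw [if_pos hq, if_neg hi, if_neg hj, if_pos hij, if_pos hji, add_zero, zero_add]
  exact balanced_block_le hn hD hc hs ht hij hji hq (hdisc hq)

theorem sum_mean_regime_le (hn : 0 < n) (hD : 0 < D) (hs : ∀ i, 0 ≤ s i)
    (hs_sum : ∑ i ∈ range N, 4 ^ i * s i ≤ 16 * n) (ht : ∀ j, 0 ≤ t j)
    (ht_sum : ∑ j ∈ range N, 4 ^ j * t j ≤ 16 * n) :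
    ∑ i ∈ range N, ∑ j ∈ range N, exp 1 * D / n * ((4 ^ i * s i) * (4 ^ j * t j)) ≤
      768 * (n * D) := by
  have hS : 0 ≤ ∑ i ∈ range N, 4 ^ i * s i := sum_nonneg fun i _ ↦ mul_nonneg (by positivity) (hs i)
  have hT : 0 ≤ ∑ j ∈ range N, 4 ^ j * t j := sum_nonneg fun j _ ↦ mul_nonneg (by positivity) (ht j)
  have hexp := exp_one_lt_three.le
  simp only [← mul_sum, ← sum_mul]
  calc _ ≤ 3 * D / n * ((16 * n) * (16 * n)) := by gcongr
    _ = 768 * (n * D) := by field_simp; norm_num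

theorem sum_levels_le {c : ℝ} (hn : 0 < n) (hD : 0 < D) (hc : 0 ≤ c)
    (hs : ∀ i, 0 ≤ s i) (hs_sum : ∑ i ∈ range N, 4 ^ i * s i ≤ 16 * n)
    (ht : ∀ j, 0 ≤ t j) (ht_sum : ∑ j ∈ range N, 4 ^ j * t j ≤ 16 * n)
    (he : ∀ i j, 0 ≤ e i j) (hes : ∀ i j, e i j ≤ D ^ 2 * s i) (het : ∀ i j, e i j ≤ D ^ 2 * t j)
    (hdisc : ∀ i j, D ≤ 2 ^ (i + j) → (1 + log (2 ^ (i + j) / D)) * e i j ≤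
      exp 1 * (2 ^ (i + j) / D) * (D ^ 2 / n * s i * t j) +
        c * (entropyBound n (s i) + entropyBound n (t j))) :
    ∑ i ∈ range N, ∑ j ∈ range N with D ≤ 2 ^ (i + j), 2 ^ (i + j) * e i j ≤
      (832 + 544 * c) * (n * D) := by
  have hrow := sum_row_regime_le (N := N) hD hs hes
  have hcol := sum_row_regime_le (N := N) (e := fun j i ↦ e i j) hD ht fun j i ↦ het i j
  have hmean := sum_mean_regime_le hn hD hs hs_sum ht ht_sum
  have hents := sum_entropy_regime_le (N := N) hn.le hD hs
  have hentt := sum_entropy_regime_le (N := N) hn.le hD ht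
  simp only [sum_filter] at hrow hcol hents hentt ⊢
  rw [sum_comm] at hcol hents
  simp only [add_comm (_ : ℕ)] at hcol
  calc _ ≤ ∑ i ∈ range N, ∑ j ∈ range N, _ := sum_le_sum fun i _ ↦ sum_le_sum fun j _ ↦
        heavy_block_le hn hD hc (hs i) (ht j) (he i j) (hdisc i j)
    _ ≤ 2 * D * (16 * n) + 2 * D * (16 * n) + 768 * (n * D) +
        c * (16 * D * (16 * n + n) + 16 * D * (16 * n + n)) := by
        simp only [sum_add_distrib, ← mul_sum (a := c)]
        gcongr
        · exact hrow.trans (by gcongr)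
        · exact hcol.trans (by gcongr)
        · exact hents.trans (by gcongr)
        · exact hentt.trans (by gcongr)
    _ = (832 + 544 * c) * (n * D) := by ring

end Levels

section Truncation

variable {θ a : ℝ}

/-- The truncation of `a` at level `θ`: it keeps the light values `|a| ≤ θ`, so that
`a - trunc θ a` is the heavy part of `a`. -/
noncomputable def trunc (θ a : ℝ) : ℝ := if |a| ≤ θ then a else 0

theorem trunc_neg (θ a : ℝ) : trunc θ (-a) = -trunc θ a := by
  rw [trunc, trunc, abs_neg]
  split_ifs
  · rfl
  · exact neg_zero.symm

theorem abs_trunc_le (hθ : 0 ≤ θ) : |trunc θ a| ≤ θ := by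
  unfold trunc
  split_ifs with h
  · exact h
  · rwa [abs_zero]

theorem trunc_sq_le : trunc θ a ^ 2 ≤ a ^ 2 := by
  unfold trunc
  split_ifs
  · rfl
  · simpa only [zero_pow two_ne_zero] using sq_nonneg a

theorem mul_abs_sub_trunc_le : θ * |a - trunc θ a| ≤ a ^ 2 := by
  unfold trunc
  split_ifs with h
  · simpa only [sub_self, abs_zero, mul_zero] using sq_nonneg a
  · rw [sub_zero, ← sq_abs, sq]
    exact mul_le_mul_of_nonneg_right (not_le.1 h).le (abs_nonneg a)

end Truncation

section DyadicLevels

variable {ι : Type*} [Fintype ι] {z w : ι → ℤ} {i j : ℕ} {u v : ι}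

/-- The indices `u` at which the integer vector `z` satisfies `2 ^ i ≤ |z u| < 2 ^ (i + 1)`. -/
def dyadicLevel (z : ι → ℤ) (i : ℕ) : Finset ι := {u | z u ≠ 0 ∧ Nat.log 2 (z u).natAbs = i}

theorem mem_dyadicLevel : u ∈ dyadicLevel z i ↔ z u ≠ 0 ∧ Nat.log 2 (z u).natAbs = i :=
  mem_filter_univ u

theorem exists_mem_dyadicLevel (hu : z u ≠ 0) : ∃ i, u ∈ dyadicLevel z i :=
  ⟨_, mem_dyadicLevel.2 ⟨hu, rfl⟩⟩

theorem exists_dyadicLevel_lt (z : ι → ℤ) : ∃ N, ∀ u i, u ∈ dyadicLevel z i → i < N :=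
  ⟨univ.sup (fun u ↦ Nat.log 2 (z u).natAbs) + 1, fun u _ hu ↦ (mem_dyadicLevel.1 hu).2 ▸
    Nat.lt_succ_of_le (le_sup (f := fun u ↦ Nat.log 2 (z u).natAbs) (mem_univ u))⟩

theorem two_pow_le_abs_of_mem_dyadicLevel (hu : u ∈ dyadicLevel z i) :
    (2 : ℝ) ^ i ≤ |(z u : ℝ)| := by
  obtain ⟨hz, rfl⟩ := mem_dyadicLevel.1 hu
  rw [← Int.cast_abs, ← Nat.cast_natAbs]
  exact_mod_cast Nat.pow_log_le_self 2 (Int.natAbs_ne_zero.2 hz)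

theorem abs_le_of_mem_dyadicLevel (hu : u ∈ dyadicLevel z i) : |(z u : ℝ)| ≤ 2 * 2 ^ i := by
  obtain ⟨-, rfl⟩ := mem_dyadicLevel.1 hu
  rw [← Int.cast_abs, ← Nat.cast_natAbs, ← pow_succ']
  exact_mod_cast (Nat.lt_pow_succ_log_self one_lt_two (z u).natAbs).le

theorem abs_mul_le_of_mem_dyadicLevel (hu : u ∈ dyadicLevel z i) (hv : v ∈ dyadicLevel w j) :
    |(z u : ℝ) * w v| ≤ 4 * 2 ^ (i + j) :=
  calc |(z u : ℝ) * w v| = |(z u : ℝ)| * |(w v : ℝ)| := abs_mul _ _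
    _ ≤ (2 * 2 ^ i) * (2 * 2 ^ j) := by
        gcongr
        exacts [abs_le_of_mem_dyadicLevel hu, abs_le_of_mem_dyadicLevel hv]
    _ = 4 * 2 ^ (i + j) := by rw [pow_add]; ring

theorem sum_four_pow_mul_card_dyadicLevel_le (z : ι → ℤ) (N : ℕ) :
    ∑ i ∈ range N, (4 : ℝ) ^ i * #(dyadicLevel z i) ≤ ∑ u, (z u : ℝ) ^ 2 := by
  have hdisj : (range N : Set ℕ).PairwiseDisjoint (dyadicLevel z) := fun i _ j _ hij ↦
    disjoint_left.2 fun u hi hj ↦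
      hij ((mem_dyadicLevel.1 hi).2.symm.trans (mem_dyadicLevel.1 hj).2)
  calc ∑ i ∈ range N, (4 : ℝ) ^ i * #(dyadicLevel z i)
      = ∑ i ∈ range N, ∑ _u ∈ dyadicLevel z i, (4 : ℝ) ^ i := by
        simp only [sum_const, nsmul_eq_mul, mul_comm]
    _ ≤ ∑ i ∈ range N, ∑ u ∈ dyadicLevel z i, (z u : ℝ) ^ 2 := by
        gcongr with i _ u hu
        rw [four_pow_eq_mul_self, ← sq, ← sq_abs (z u : ℝ)]
        gcongr
        exact two_pow_le_abs_of_mem_dyadicLevel hu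
    _ = ∑ u ∈ (range N).disjiUnion _ hdisj, (z u : ℝ) ^ 2 := (sum_disjiUnion _ _ hdisj).symm
    _ ≤ ∑ u, (z u : ℝ) ^ 2 :=
        sum_le_univ_sum_of_nonneg fun u ↦ sq_nonneg _

end DyadicLevels

section Heavy

open scoped Classical in
/-- The integer vectors of Euclidean norm at most `4 √n`, where `n` is the dimension: rescaled by
`1 / (4 √n)`, a net of the unit ball. -/
noncomputable def latticeBall (ι : Type*) [Fintype ι] : Finset (ι → ℤ) :=
  {z ∈ Fintype.piFinset fun _ ↦ Icc (-16 * Fintype.card ι : ℤ) (16 * Fintype.card ι) |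
    ∑ u, (z u : ℝ) ^ 2 ≤ 16 * Fintype.card ι}

variable {ι : Type*} [Fintype ι]

theorem mem_latticeBall {z : ι → ℤ} :
    z ∈ latticeBall ι ↔ ∑ u, (z u : ℝ) ^ 2 ≤ 16 * Fintype.card ι := by
  classical
  refine ⟨fun h ↦ (mem_filter.1 h).2, fun h ↦ mem_filter.2 ⟨Fintype.mem_piFinset.2 fun u ↦ ?_, h⟩⟩
  have hu : z u ^ 2 ≤ 16 * Fintype.card ι := by
    exact_mod_cast (single_le_sum (f := fun u ↦ (z u : ℝ) ^ 2) (fun _ _ ↦ sq_nonneg _)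
      (mem_univ u)).trans h
  have habs : |z u| ≤ 16 * Fintype.card ι := by
    rw [← sq_abs] at hu
    nlinarith [abs_nonneg (z u)]
  rw [mem_Icc, neg_mul]
  exact abs_le.1 habs

theorem card_le_mul_card_of_fiber_le {α β : Type*} [DecidableEq β] {f : α → β} {X : Finset α}
    {S : Finset β} {d : ℝ} (hf : ∀ x ∈ X, f x ∈ S) (hd : ∀ u ∈ S, (#{x ∈ X | f x = u} : ℝ) ≤ d) :
    (#X : ℝ) ≤ d * #S :=
  calc (#X : ℝ) = ∑ u ∈ S, (#{x ∈ X | f x = u} : ℝ) := by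
        exact_mod_cast card_eq_sum_card_fiberwise hf
    _ ≤ ∑ _u ∈ S, d := sum_le_sum hd
    _ = d * #S := by rw [sum_const, nsmul_eq_mul, mul_comm]

variable [DecidableEq ι] {F : Finset (ι × ι)}

/-- The discrepancy property of an edge set `F` of density `p`: each rectangle `S ×ˢ T` either
holds few edges or not many more than the expected `p |S| |T|`. The two alternatives are encoded
at once by quantifying over the parameter `1 + log x` of the Chernoff bound. -/
def HasDiscrepancy (F : Finset (ι × ι)) (p c : ℝ) : Prop :=
  ∀ (S T : Finset ι) (x : ℝ), 1 ≤ x → (1 + log x) * #(F ∩ S ×ˢ T) ≤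
    exp 1 * x * (p * #S * #T) +
      c * (entropyBound (Fintype.card ι) #S + entropyBound (Fintype.card ι) #T)

theorem abs_sub_trunc_le_sum_levels {D θ : ℝ} (hD : 0 < D) (hθ : 4 * D ≤ θ) {z w : ι → ℤ}
    {N : ℕ} (hz : ∀ u i, u ∈ dyadicLevel z i → i < N) (hw : ∀ v j, v ∈ dyadicLevel w j → j < N)
    (e : ι × ι) :
    |z e.1 * w e.2 - trunc θ (z e.1 * w e.2)| ≤
      ∑ q ∈ range N ×ˢ range N with D ≤ 2 ^ (q.1 + q.2),
        if e ∈ dyadicLevel z q.1 ×ˢ dyadicLevel w q.2 then (4 : ℝ) * 2 ^ (q.1 + q.2) else 0 := by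
  have hθ₀ : 0 ≤ θ := by linarith
  by_cases h : |(z e.1 : ℝ) * w e.2| ≤ θ
  · rw [trunc, if_pos h, sub_self, abs_zero]
    exact sum_nonneg fun q _ ↦ by positivity
  obtain ⟨i, hi⟩ := exists_mem_dyadicLevel (z := z) (u := e.1) fun h₀ ↦ h (by simp [h₀, hθ₀])
  obtain ⟨j, hj⟩ := exists_mem_dyadicLevel (z := w) (u := e.2) fun h₀ ↦ h (by simp [h₀, hθ₀])
  have hval := abs_mul_le_of_mem_dyadicLevel hi hj
  have hmem : (i, j) ∈ ({q ∈ range N ×ˢ range N | D ≤ 2 ^ (q.1 + q.2)} : Finset (ℕ × ℕ)) :=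
    mem_filter.2 ⟨mem_product.2 ⟨mem_range.2 (hz _ _ hi), mem_range.2 (hw _ _ hj)⟩,
      by linarith [not_le.1 h]⟩
  rw [trunc, if_neg h, sub_zero]
  refine le_trans ?_ (single_le_sum (fun q _ ↦ by positivity) hmem)
  rwa [if_pos (mem_product.2 ⟨hi, hj⟩)]

theorem sum_heavy_le_sum_levels {D θ : ℝ} (hD : 0 < D) (hθ : 4 * D ≤ θ) (z w : ι → ℤ) :
    ∃ N, ∑ e ∈ F, |z e.1 * w e.2 - trunc θ (z e.1 * w e.2)| ≤
      4 * ∑ i ∈ range N, ∑ j ∈ range N with D ≤ 2 ^ (i + j),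
        2 ^ (i + j) * (#(F ∩ dyadicLevel z i ×ˢ dyadicLevel w j) : ℝ) := by
  obtain ⟨M, hM⟩ := exists_dyadicLevel_lt z
  obtain ⟨N, hN⟩ := exists_dyadicLevel_lt w
  refine ⟨max M N, (sum_le_sum fun e _ ↦ abs_sub_trunc_le_sum_levels hD hθ
    (fun u i hu ↦ (hM u i hu).trans_le (le_max_left M N))
    (fun v j hv ↦ (hN v j hv).trans_le (le_max_right M N)) e).trans_eq ?_⟩
  rw [sum_comm]
  simp only [sum_ite_mem, sum_const, nsmul_eq_mul, mul_sum, sum_filter, sum_product]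
  refine sum_congr rfl fun i _ ↦ sum_congr rfl fun j _ ↦ ?_
  split_ifs <;> ring

theorem sum_heavy_le [Nonempty ι] {c D θ : ℝ} (hD : 0 < D) (hc : 0 ≤ c) (hθ : 4 * D ≤ θ)
    (hF : HasDiscrepancy F (D ^ 2 / Fintype.card ι) c) {z w : ι → ℤ}
    (hz : z ∈ latticeBall ι) (hw : w ∈ latticeBall ι)
    (hrow : ∀ u, z u ≠ 0 → (#{e ∈ F | e.1 = u} : ℝ) ≤ D ^ 2)
    (hcol : ∀ v, w v ≠ 0 → (#{e ∈ F | e.2 = v} : ℝ) ≤ D ^ 2) :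
    ∑ e ∈ F, |z e.1 * w e.2 - trunc θ (z e.1 * w e.2)| ≤
      4 * ((832 + 544 * c) * (Fintype.card ι * D)) := by
  obtain ⟨N, hN⟩ := sum_heavy_le_sum_levels (F := F) hD hθ z w
  refine hN.trans (mul_le_mul_of_nonneg_left ?_ zero_le_four)
  have hfilter (p : ι × ι → Prop) [DecidablePred p] (S T : Finset ι) :
      (#{e ∈ F ∩ S ×ˢ T | p e} : ℝ) ≤ #{e ∈ F | p e} := by
    gcongr; exact inter_subset_left
  refine sum_levels_le (by exact_mod_cast Fintype.card_pos) hD hc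
    (fun i ↦ (#(dyadicLevel z i)).cast_nonneg)
    ((sum_four_pow_mul_card_dyadicLevel_le z N).trans (mem_latticeBall.1 hz))
    (fun j ↦ (#(dyadicLevel w j)).cast_nonneg)
    ((sum_four_pow_mul_card_dyadicLevel_le w N).trans (mem_latticeBall.1 hw))
    (fun i j ↦ Nat.cast_nonneg _) (fun i j ↦ ?_) (fun i j ↦ ?_)
    (fun i j hq ↦ hF _ _ _ ((one_le_div hD).2 hq))
  · exact card_le_mul_card_of_fiber_le (f := Prod.fst)
      (fun e he ↦ (mem_product.1 (mem_inter.1 he).2).1)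
      fun u hu ↦ (hfilter _ _ _).trans (hrow u (mem_dyadicLevel.1 hu).1)
  · exact card_le_mul_card_of_fiber_le (f := Prod.snd)
      (fun e he ↦ (mem_product.1 (mem_inter.1 he).2).2)
      fun v hv ↦ (hfilter _ _ _).trans (hcol v (mem_dyadicLevel.1 hv).1)

end Heavy

section Net

theorem exists_int_abs_le_abs_sub_le_one (a : ℝ) : ∃ z : ℤ, |(z : ℝ)| ≤ |a| ∧ |a - z| ≤ 1 := by
  wlog ha : 0 ≤ a generalizing a
  · obtain ⟨z, hz, hza⟩ := this (-a) (by linarith)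
    refine ⟨-z, ?_, ?_⟩
    · rwa [Int.cast_neg, abs_neg, ← abs_neg a]
    · rwa [Int.cast_neg, ← abs_neg, neg_sub', neg_neg]
  · refine ⟨⌊a⌋, ?_, ?_⟩
    · rw [abs_of_nonneg ha, abs_of_nonneg (Int.cast_nonneg (Int.floor_nonneg.2 ha))]
      exact Int.floor_le a
    · rw [Int.self_sub_floor, Int.abs_fract]
      exact (Int.fract_lt_one a).le

variable {ι : Type*} [Fintype ι]

/-- The point of Euclidean space with integer coordinates `z`. -/
noncomputable def latticePoint (z : ι → ℤ) : EuclideanSpace ℝ ι := WithLp.toLp 2 fun u ↦ (z u : ℝ)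

theorem norm_latticePoint_sq (z : ι → ℤ) : ‖latticePoint z‖ ^ 2 = ∑ u, (z u : ℝ) ^ 2 :=
  EuclideanSpace.real_norm_sq_eq _

theorem norm_latticePoint_le_iff {z : ι → ℤ} :
    ‖latticePoint z‖ ≤ 4 * √(Fintype.card ι) ↔ z ∈ latticeBall ι := by
  rw [mem_latticeBall, ← norm_latticePoint_sq, ← sq_le_sq₀ (norm_nonneg _) (by positivity), mul_pow,
    sq_sqrt (Nat.cast_nonneg _)]
  norm_num

theorem exists_norm_latticePoint_le_norm_sub_le (x : EuclideanSpace ℝ ι) :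
    ∃ z, ‖latticePoint z‖ ≤ ‖x‖ ∧ ‖x - latticePoint z‖ ≤ √(Fintype.card ι) := by
  choose z hz hzx using fun u ↦ exists_int_abs_le_abs_sub_le_one (x u)
  refine ⟨z, ?_, le_sqrt_of_sq_le ?_⟩
  · rw [EuclideanSpace.norm_eq, EuclideanSpace.norm_eq]
    gcongr with u
    exact hz u
  · calc ‖x - latticePoint z‖ ^ 2 = ∑ u, (x u - z u) ^ 2 := EuclideanSpace.real_norm_sq_eq _
      _ ≤ ∑ _u : ι, 1 := by
          gcongr with u
          exact (sq_le_one_iff_abs_le_one _).2 (hzx u)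
      _ = Fintype.card ι := by rw [sum_const, nsmul_eq_mul, mul_one, card_univ]

theorem exists_mem_latticeBall_norm_sub_le {x : EuclideanSpace ℝ ι} (hx : ‖x‖ = 1) :
    ∃ z ∈ latticeBall ι, ‖(4 * √(Fintype.card ι)) • x - latticePoint z‖ ≤ √(Fintype.card ι) := by
  obtain ⟨z, hz, hzx⟩ := exists_norm_latticePoint_le_norm_sub_le ((4 * √(Fintype.card ι)) • x)
  rw [norm_smul, hx, mul_one, norm_of_nonneg (by positivity)] at hz
  exact ⟨z, norm_latticePoint_le_iff.1 hz, hzx⟩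

section OpNorm

variable [Nonempty ι] {T : EuclideanSpace ℝ ι →L[ℝ] EuclideanSpace ℝ ι} {b : ℝ}

theorem inner_le_of_forall_latticeBall
    (h : ∀ z ∈ latticeBall ι, ∀ w ∈ latticeBall ι,
      inner ℝ (T (latticePoint w)) (latticePoint z) ≤ b * Fintype.card ι)
    {x y : EuclideanSpace ℝ ι} (hx : ‖x‖ = 1) (hy : ‖y‖ = 1) :
    inner ℝ (T x) y ≤ b / 16 + ‖T‖ / 2 := by
  obtain ⟨w, hw, hxw⟩ := exists_mem_latticeBall_norm_sub_le hx
  obtain ⟨z, hz, hyz⟩ := exists_mem_latticeBall_norm_sub_le hy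
  have hn : (0 : ℝ) < Fintype.card ι := Nat.cast_pos.2 Fintype.card_pos
  set s : ℝ := √(Fintype.card ι)
  have hs : s * s = Fintype.card ι := mul_self_sqrt hn.le
  have hsplit : 16 * Fintype.card ι * inner ℝ (T x) y =
      inner ℝ (T (latticePoint w)) (latticePoint z) +
        inner ℝ (T ((4 * s) • x)) ((4 * s) • y - latticePoint z) +
        inner ℝ (T ((4 * s) • x - latticePoint w)) (latticePoint z) := by
    simp only [map_sub, map_smul, inner_sub_left, inner_sub_right, real_inner_smul_left,
      real_inner_smul_right, ← hs]
    ring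
  have hleft : inner ℝ (T ((4 * s) • x)) ((4 * s) • y - latticePoint z) ≤
      ‖T‖ * (4 * s) * s := by
    refine (real_inner_le_norm _ _).trans (mul_le_mul (T.le_opNorm_of_le ?_) hyz (norm_nonneg _)
      (by positivity))
    rw [norm_smul, hx, mul_one, norm_of_nonneg (by positivity)]
  have hright : inner ℝ (T ((4 * s) • x - latticePoint w)) (latticePoint z) ≤
      ‖T‖ * s * (4 * s) :=
    (real_inner_le_norm _ _).trans (mul_le_mul (T.le_opNorm_of_le hxw)
      (norm_latticePoint_le_iff.2 hz) (norm_nonneg _) (by positivity))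
  refine le_of_mul_le_mul_left ?_ (mul_pos (by norm_num : (0 : ℝ) < 16) hn)
  linear_combination hsplit + hleft + hright + h z hz w hw + 8 * ‖T‖ * hs

theorem norm_le_of_forall_latticeBall
    (h : ∀ z ∈ latticeBall ι, ∀ w ∈ latticeBall ι,
      inner ℝ (T (latticePoint w)) (latticePoint z) ≤ b * Fintype.card ι) : ‖T‖ ≤ b / 8 := by
  have hzero : 0 ∈ latticeBall ι := mem_latticeBall.2 (by simp)
  have hb : 0 ≤ b := by
    have h₀ := h 0 hzero 0 hzero
    rw [show latticePoint (0 : ι → ℤ) = 0 from PiLp.ext fun _ ↦ Int.cast_zero, inner_zero_right]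
      at h₀
    exact nonneg_of_mul_nonneg_left h₀ (Nat.cast_pos.2 Fintype.card_pos)
  have hT : ‖T‖ ≤ b / 16 + ‖T‖ / 2 :=
    ContinuousLinearMap.opNorm_le_of_re_inner_le (by positivity) fun x y hx hy ↦
      inner_le_of_forall_latticeBall h hx hy
  linarith

end OpNorm

theorem sum_Icc_half_pow_natAbs_le (N : ℕ) :
    ∑ z ∈ Icc (-N : ℤ) N, (1 / 2 : ℝ) ^ z.natAbs ≤ 3 := by
  suffices h : ∑ z ∈ Icc (-N : ℤ) N, (1 / 2 : ℝ) ^ z.natAbs = 3 - 2 * (1 / 2) ^ N by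
    rw [h]
    exact sub_le_self _ (by positivity)
  induction N with
  | zero => norm_num
  | succ N ih =>
    have hIcc : Icc (-(N + 1 : ℕ) : ℤ) (N + 1 : ℕ) =
        insert ((N + 1 : ℕ) : ℤ) (insert (-(N + 1 : ℕ) : ℤ) (Icc (-N : ℤ) N)) := by
      ext z
      simp only [mem_insert, mem_Icc]
      lia
    rw [hIcc, sum_insert, sum_insert, ih, Int.natAbs_neg, Int.natAbs_natCast, pow_succ]
    · ring
    · simp
    · simp only [mem_insert, mem_Icc]
      lia

theorem exp_neg_sq_le_half_pow_natAbs (z : ℤ) : exp (-(z : ℝ) ^ 2) ≤ (1 / 2) ^ z.natAbs := by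
  have hz : (z.natAbs : ℝ) ≤ (z : ℝ) ^ 2 := by
    rw [Nat.cast_natAbs]
    exact_mod_cast Int.natAbs_le_self_sq z
  calc exp (-(z : ℝ) ^ 2) ≤ exp (z.natAbs * (-1)) := exp_le_exp.2 (by linarith)
    _ = exp (-1) ^ z.natAbs := exp_nat_mul _ _
    _ ≤ (1 / 2) ^ z.natAbs := by
        gcongr
        linarith [exp_neg_one_lt_d9]

theorem card_latticeBall_le : (#(latticeBall ι) : ℝ) ≤ exp (18 * Fintype.card ι) := by
  classical
  set n := Fintype.card ι
  have hIcc : ∑ z ∈ Icc (-16 * n : ℤ) (16 * n), exp (-(z : ℝ) ^ 2) ≤ exp 2 :=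
    calc ∑ z ∈ Icc (-16 * n : ℤ) (16 * n), exp (-(z : ℝ) ^ 2)
        ≤ ∑ z ∈ Icc (-16 * n : ℤ) (16 * n), (1 / 2 : ℝ) ^ z.natAbs :=
          sum_le_sum fun z _ ↦ exp_neg_sq_le_half_pow_natAbs z
      _ ≤ 3 := by simpa using sum_Icc_half_pow_natAbs_le (16 * n)
      _ ≤ exp 2 := by linarith [add_one_le_exp (2 : ℝ)]
  calc (#(latticeBall ι) : ℝ) = ∑ z ∈ latticeBall ι, 1 := by rw [sum_const, nsmul_eq_mul, mul_one]
    _ ≤ ∑ z ∈ latticeBall ι, exp (16 * n) * ∏ u, exp (-(z u : ℝ) ^ 2) := by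
        gcongr with z hz
        rw [← exp_sum, ← exp_add, sum_neg_distrib]
        exact one_le_exp (by linarith [mem_latticeBall.1 hz])
    _ ≤ ∑ z ∈ Fintype.piFinset fun _ : ι ↦ Icc (-16 * n : ℤ) (16 * n),
          exp (16 * n) * ∏ u, exp (-(z u : ℝ) ^ 2) :=
        sum_le_sum_of_subset_of_nonneg (filter_subset _ _) fun _ _ _ ↦ by positivity
    _ = exp (16 * n) * ∏ _u : ι, ∑ z ∈ Icc (-16 * n : ℤ) (16 * n), exp (-(z : ℝ) ^ 2) := by
        rw [← mul_sum, prod_univ_sum]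
    _ ≤ exp (16 * n) * ∏ _u : ι, exp 2 := by gcongr
    _ = exp (18 * n) := by
        rw [prod_const, show #(univ : Finset ι) = n from card_univ, ← exp_nat_mul, ← exp_add]
        ring_nf

end Net

section MatrixNorm

variable {n : ℕ} {M : Matrix (Fin n) (Fin n) ℝ} {b : ℝ}

theorem sqnorm_eq_norm_toLp (x : Fin n → ℝ) : sqnorm x = ‖WithLp.toLp 2 x‖ := by
  simp only [sqnorm, EuclideanSpace.norm_eq, norm_eq_abs, sq_abs]

theorem opNorm_le_norm_toEuclideanCLM : opNorm M ≤ ‖Matrix.toEuclideanCLM (𝕜 := ℝ) M‖ := by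
  refine Real.sSup_le ?_ (norm_nonneg _)
  rintro t ⟨x, hx, rfl⟩
  rw [sqnorm_eq_norm_toLp] at hx ⊢
  rw [← Matrix.toEuclideanCLM_toLp]
  exact ContinuousLinearMap.unit_le_opNorm _ _ hx.le

theorem opNorm_le_of_forall_latticeBall [NeZero n]
    (h : ∀ z ∈ latticeBall (Fin n), ∀ w ∈ latticeBall (Fin n),
      ∑ u, ∑ v, M u v * (z u * w v) ≤ b * n) : opNorm M ≤ b / 8 := by
  refine opNorm_le_norm_toEuclideanCLM.trans (norm_le_of_forall_latticeBall fun z hz w hw ↦ ?_)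
  rw [Fintype.card_fin]
  convert h z hz w hw using 1
  rw [latticePoint, latticePoint, Matrix.toEuclideanCLM_toLp, EuclideanSpace.inner_toLp_toLp]
  simp only [dotProduct, Matrix.mulVec, star_trivial, mul_sum]
  exact sum_congr rfl fun u _ ↦ sum_congr rfl fun v _ ↦ by ring

end MatrixNorm

section EdgeSets

variable {n : ℕ} {A B : Adj n}

/-- The adjacency matrices carrying positive weight: those of simple graphs. -/
def IsSimple (A : Adj n) : Prop := (∀ u, A u u = false) ∧ ∀ u v, A u v = A v u

/-- The potential edges of a graph on `Fin n`, each unordered pair being listed once. -/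
def pairs (n : ℕ) : Finset (Fin n × Fin n) := {e | e.1 < e.2}

/-- The edges of the graph with adjacency matrix `A`, as a subset of `pairs n`. -/
def edgeFinset (A : Adj n) : Finset (Fin n × Fin n) := {e ∈ pairs n | A e.1 e.2}

theorem mem_edgeFinset {e : Fin n × Fin n} : e ∈ edgeFinset A ↔ e.1 < e.2 ∧ A e.1 e.2 := by
  rw [edgeFinset, pairs, mem_filter, mem_filter_univ]

theorem edgeFinset_subset_pairs (A : Adj n) : edgeFinset A ⊆ pairs n := filter_subset _ _

theorem IsSimple.ext (hA : IsSimple A) (hB : IsSimple B) (h : edgeFinset A = edgeFinset B) :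
    A = B := by
  have hlt {u v : Fin n} (huv : u < v) : A u v = B u v := by
    have := Finset.ext_iff.1 h (u, v)
    rwa [mem_edgeFinset, mem_edgeFinset, and_congr_right_iff, ← Bool.eq_iff_iff, imp_iff_right huv]
      at this
  funext u v
  obtain huv | rfl | huv := lt_trichotomy u v
  · exact hlt huv
  · rw [hA.1, hB.1]
  · rw [hA.2, hB.2, hlt huv]

theorem exists_isSimple_edgeFinset_eq {t : Finset (Fin n × Fin n)} (ht : t ⊆ pairs n) :
    ∃ A : Adj n, IsSimple A ∧ edgeFinset A = t := by
  have hlt {e : Fin n × Fin n} (he : e ∈ t) : e.1 < e.2 := (mem_filter.1 (ht he)).2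
  refine ⟨fun u v ↦ decide ((u, v) ∈ t ∨ (v, u) ∈ t), ⟨fun u ↦ ?_, fun u v ↦ ?_⟩, ?_⟩
  · exact decide_eq_false (or_self_iff.not.2 fun hu ↦ (hlt hu).false)
  · simp only [or_comm]
  · ext e
    rw [mem_edgeFinset, decide_eq_true_iff]
    exact ⟨fun h ↦ h.2.resolve_right fun he ↦ h.1.not_gt (hlt he), fun he ↦ ⟨hlt he, .inl he⟩⟩

end EdgeSets

section Weight

variable {n : ℕ} {P : Matrix (Fin n) (Fin n) ℝ} {A : Adj n}

theorem weight_of_isSimple (hA : IsSimple A) :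
    weight P A = ∏ e ∈ pairs n, if A e.1 e.2 then P e.1 e.2 else 1 - P e.1 e.2 := by
  rw [weight, if_pos (show _ ∧ _ from hA), pairs, prod_filter, Fintype.prod_prod_type]

theorem weight_of_not_isSimple (hA : ¬IsSimple A) : weight P A = 0 := if_neg hA

theorem weight_nonneg (hP : ∀ u v, 0 ≤ P u v ∧ P u v ≤ 1) (A : Adj n) : 0 ≤ weight P A := by
  by_cases hA : IsSimple A
  · rw [weight_of_isSimple hA]
    refine prod_nonneg fun e _ ↦ ?_
    split_ifs
    exacts [(hP _ _).1, sub_nonneg.2 (hP _ _).2]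
  · exact (weight_of_not_isSimple hA).ge

theorem weight_mul_prod_edgeFinset (hA : IsSimple A) (g : Fin n × Fin n → ℝ) :
    weight P A * ∏ e ∈ edgeFinset A, g e =
      (∏ e ∈ edgeFinset A, P e.1 e.2 * g e) * ∏ e ∈ pairs n \ edgeFinset A, (1 - P e.1 e.2) := by
  rw [weight_of_isSimple hA, prod_ite, filter_not, ← edgeFinset, prod_mul_distrib, mul_right_comm]

theorem sum_weight_mul_prod_edgeFinset (P : Matrix (Fin n) (Fin n) ℝ) (g : Fin n × Fin n → ℝ) :
    ∑ A, weight P A * ∏ e ∈ edgeFinset A, g e =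
      ∏ e ∈ pairs n, (P e.1 e.2 * g e + (1 - P e.1 e.2)) := by
  classical
  calc ∑ A, weight P A * ∏ e ∈ edgeFinset A, g e
      = ∑ A with IsSimple A, weight P A * ∏ e ∈ edgeFinset A, g e := by
        refine (sum_filter_of_ne fun A _ hA ↦ ?_).symm
        contrapose! hA
        rw [weight_of_not_isSimple hA, zero_mul]
    _ = ∑ t ∈ (pairs n).powerset,
          (∏ e ∈ t, P e.1 e.2 * g e) * ∏ e ∈ pairs n \ t, (1 - P e.1 e.2) := by
        refine sum_nbij edgeFinset (fun A _ ↦ mem_powerset.2 (edgeFinset_subset_pairs A))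
          (fun A hA B hB ↦ ?_) (fun t ht ↦ ?_)
          fun A hA ↦ weight_mul_prod_edgeFinset (mem_filter.1 hA).2 g
        · exact IsSimple.ext (mem_filter.1 hA).2 (mem_filter.1 hB).2
        · obtain ⟨A, hA, rfl⟩ := exists_isSimple_edgeFinset_eq (mem_powerset.1 ht)
          exact ⟨A, mem_filter.2 ⟨mem_univ A, hA⟩, rfl⟩
    _ = ∏ e ∈ pairs n, (P e.1 e.2 * g e + (1 - P e.1 e.2)) := (prod_add _ _ _).symm

theorem sum_weight (P : Matrix (Fin n) (Fin n) ℝ) : ∑ A, weight P A = 1 := by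
  simpa using sum_weight_mul_prod_edgeFinset P 1

end Weight

section Prob

variable {n : ℕ} {P : Matrix (Fin n) (Fin n) ℝ} {S T : Set (Adj n)}

theorem one_sub_prob_compl (P : Matrix (Fin n) (Fin n) ℝ) (S : Set (Adj n)) :
    1 - prob P Sᶜ = prob P S := by
  rw [sub_eq_iff_eq_add, prob, prob, ← sum_add_distrib, ← sum_weight P]
  exact sum_congr rfl fun A _ ↦ (congrFun (Set.indicator_self_add_compl S (weight P)) A).symm

theorem prob_univ (P : Matrix (Fin n) (Fin n) ℝ) : prob P Set.univ = 1 := by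
  rw [prob, Set.indicator_univ, sum_weight]

theorem prob_mono (hP : ∀ u v, 0 ≤ P u v ∧ P u v ≤ 1) (h : ∀ A, IsSimple A → A ∈ S → A ∈ T) :
    prob P S ≤ prob P T := by
  have hT (A : Adj n) : 0 ≤ T.indicator (weight P) A :=
    Set.indicator_nonneg (fun A _ ↦ weight_nonneg hP A) A
  refine sum_le_sum fun A _ ↦ Set.indicator_apply_le' (fun hAS ↦ ?_) fun _ ↦ hT A
  by_cases hA : IsSimple A
  · exact (Set.indicator_of_mem (h A hA hAS) _).ge
  · exact (weight_of_not_isSimple hA).trans_le (hT A)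

theorem prob_union_le (hP : ∀ u v, 0 ≤ P u v ∧ P u v ≤ 1) (S T : Set (Adj n)) :
    prob P (S ∪ T) ≤ prob P S + prob P T := by
  simp only [prob, ← sum_add_distrib]
  refine sum_le_sum fun A _ ↦ ?_
  rw [← Set.indicator_union_add_inter_apply]
  exact le_add_of_nonneg_right (Set.indicator_nonneg (fun A _ ↦ weight_nonneg hP A) A)

theorem prob_biUnion_le (hP : ∀ u v, 0 ≤ P u v ∧ P u v ≤ 1) {α : Type*} (I : Finset α)
    (E : α → Set (Adj n)) : prob P (⋃ i ∈ I, E i) ≤ ∑ i ∈ I, prob P (E i) := by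
  classical
  induction I using Finset.induction_on with
  | empty => simp [prob]
  | insert a I ha ih =>
    rw [set_biUnion_insert, sum_insert ha]
    exact (prob_union_le hP _ _).trans (by gcongr)

theorem prob_le_sum_weight_mul (hP : ∀ u v, 0 ≤ P u v ∧ P u v ≤ 1) {f : Adj n → ℝ}
    (hf : ∀ A, 0 ≤ f A) (h : ∀ A ∈ S, 1 ≤ f A) : prob P S ≤ ∑ A, weight P A * f A := by
  refine sum_le_sum fun A _ ↦ Set.indicator_apply_le'
    (fun hA ↦ le_mul_of_one_le_right (weight_nonneg hP A) (h A hA))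
    fun _ ↦ mul_nonneg (weight_nonneg hP A) (hf A)

theorem prob_lt_sum_edgeFinset_le (hP : ∀ u v, 0 ≤ P u v ∧ P u v ≤ 1) (c : Fin n × Fin n → ℝ)
    (t : ℝ) :
    prob P {A | t < ∑ e ∈ edgeFinset A, c e} ≤
      exp (-t + ∑ e ∈ pairs n, P e.1 e.2 * (exp (c e) - 1)) :=
  calc prob P {A | t < ∑ e ∈ edgeFinset A, c e}
      ≤ ∑ A, weight P A * exp (-t + ∑ e ∈ edgeFinset A, c e) :=
        prob_le_sum_weight_mul hP (fun A ↦ (exp_pos _).le) fun A (hA : t < _) ↦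
          one_le_exp (by linarith)
    _ = exp (-t) * ∏ e ∈ pairs n, (P e.1 e.2 * exp (c e) + (1 - P e.1 e.2)) := by
        rw [← sum_weight_mul_prod_edgeFinset, mul_sum]
        refine sum_congr rfl fun A _ ↦ ?_
        rw [exp_add, exp_sum]
        ring
    _ ≤ exp (-t) * ∏ e ∈ pairs n, exp (P e.1 e.2 * (exp (c e) - 1)) := by
        gcongr with e
        · exact fun e _ ↦ add_nonneg (mul_nonneg (hP _ _).1 (exp_pos _).le)
            (sub_nonneg.2 (hP _ _).2)
        · linarith [add_one_le_exp (P e.1 e.2 * (exp (c e) - 1))]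
    _ = exp (-t + ∑ e ∈ pairs n, P e.1 e.2 * (exp (c e) - 1)) := by rw [exp_add, exp_sum]

end Prob

section LightForms

variable {n : ℕ} {P : Matrix (Fin n) (Fin n) ℝ}

/-- The sum of `c e` over the edges of `A`, centered when the edges are drawn with
probabilities `P`. -/
def centeredSum (P : Matrix (Fin n) (Fin n) ℝ) (A : Adj n) (c : Fin n × Fin n → ℝ) : ℝ :=
  ∑ e ∈ edgeFinset A, c e - ∑ e ∈ pairs n, P e.1 e.2 * c e

theorem centeredSum_neg (P : Matrix (Fin n) (Fin n) ℝ) (A : Adj n) (c : Fin n × Fin n → ℝ) :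
    centeredSum P A (fun e ↦ -c e) = -centeredSum P A c := by
  simp only [centeredSum, mul_neg, sum_neg_distrib]
  ring

theorem prob_lt_centeredSum_le (hP : ∀ u v, 0 ≤ P u v ∧ P u v ≤ 1) {c : Fin n × Fin n → ℝ}
    {θ V : ℝ} (hθ : 0 < θ) (hc : ∀ e, |c e| ≤ θ)
    (hV : ∑ e ∈ pairs n, P e.1 e.2 * c e ^ 2 ≤ θ ^ 2 * V) (r : ℝ) :
    prob P {A | θ * (r + V) < centeredSum P A c} ≤ exp (-r) := by
  have hexp (e : Fin n × Fin n) : exp (c e / θ) - 1 ≤ c e / θ + (c e / θ) ^ 2 := by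
    have hce : |c e / θ| ≤ 1 := by
      rw [abs_div, abs_of_pos hθ]
      exact div_le_one_of_le₀ (hc e) hθ.le
    linarith [le_of_abs_le (abs_exp_sub_one_sub_id_le hce)]
  have hsum : ∑ e ∈ pairs n, P e.1 e.2 * (exp (c e / θ) - 1) ≤
      (∑ e ∈ pairs n, P e.1 e.2 * c e) / θ + V :=
    calc ∑ e ∈ pairs n, P e.1 e.2 * (exp (c e / θ) - 1)
        ≤ ∑ e ∈ pairs n, P e.1 e.2 * (c e / θ + (c e / θ) ^ 2) :=
          sum_le_sum fun e _ ↦ mul_le_mul_of_nonneg_left (hexp e) (hP _ _).1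
      _ = (∑ e ∈ pairs n, P e.1 e.2 * c e) / θ +
            (∑ e ∈ pairs n, P e.1 e.2 * c e ^ 2) / θ ^ 2 := by
          rw [sum_div, sum_div, ← sum_add_distrib]
          exact sum_congr rfl fun e _ ↦ by ring
      _ ≤ (∑ e ∈ pairs n, P e.1 e.2 * c e) / θ + V := by
          gcongr
          exact (div_le_iff₀' (by positivity)).2 hV
  refine (prob_mono hP fun A _ hA ↦ ?_).trans ((prob_lt_sum_edgeFinset_le hP (fun e ↦ c e / θ)
    (r + V + (∑ e ∈ pairs n, P e.1 e.2 * c e) / θ)).trans (exp_le_exp.2 (by linarith)))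
  rw [Set.mem_ofPred_eq, ← sum_div, ← lt_sub_iff_add_lt, ← sub_div, lt_div_iff₀' hθ]
  exact hA

theorem sum_pairs_mul_sq_le {q : ℝ} (hq : 0 ≤ q) (hPq : ∀ u v, P u v ≤ q) {z w : Fin n → ℤ}
    (hz : z ∈ latticeBall (Fin n)) (hw : w ∈ latticeBall (Fin n)) :
    ∑ e ∈ pairs n, P e.1 e.2 * (z e.1 * w e.2 : ℝ) ^ 2 ≤ q * (16 * n) ^ 2 := by
  rw [mem_latticeBall, Fintype.card_fin] at hz hw
  calc ∑ e ∈ pairs n, P e.1 e.2 * (z e.1 * w e.2 : ℝ) ^ 2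
      ≤ ∑ e ∈ pairs n, q * (z e.1 * w e.2 : ℝ) ^ 2 := by gcongr with e; exact hPq _ _
    _ ≤ ∑ e : Fin n × Fin n, q * (z e.1 * w e.2 : ℝ) ^ 2 :=
        sum_le_univ_sum_of_nonneg fun e ↦ by positivity
    _ = q * ((∑ u, (z u : ℝ) ^ 2) * ∑ v, (w v : ℝ) ^ 2) := by
        simp only [Fintype.sum_prod_type, mul_pow, ← mul_sum, ← sum_mul]
    _ ≤ q * (16 * n) ^ 2 := by
        rw [sq (16 * n : ℝ)]
        gcongr

variable {D : ℝ}

theorem prob_lt_centeredSum_trunc_le (hP : ∀ u v, 0 ≤ P u v ∧ P u v ≤ 1) (hD : 0 < D)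
    (hPD : ∀ u v, P u v ≤ D ^ 2 / n) {z w : Fin n → ℤ} (hz : z ∈ latticeBall (Fin n))
    (hw : w ∈ latticeBall (Fin n)) (r : ℝ) :
    prob P {A | 16 * D * (r + n) <
      centeredSum P A fun e ↦ trunc (16 * D) (z e.1 * w e.2)} ≤ exp (-r) := by
  refine prob_lt_centeredSum_le hP (by positivity) (fun e ↦ abs_trunc_le (by positivity)) ?_ r
  calc ∑ e ∈ pairs n, P e.1 e.2 * trunc (16 * D) (z e.1 * w e.2) ^ 2
      ≤ ∑ e ∈ pairs n, P e.1 e.2 * (z e.1 * w e.2 : ℝ) ^ 2 :=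
        sum_le_sum fun e _ ↦ mul_le_mul_of_nonneg_left trunc_sq_le (hP _ _).1
    _ ≤ D ^ 2 / n * (16 * n) ^ 2 := sum_pairs_mul_sq_le (by positivity) hPD hz hw
    _ = (16 * D) ^ 2 * n := by
        obtain rfl | hn := eq_or_ne n 0
        · simp
        · field_simp

theorem prob_exists_lt_abs_centeredSum_trunc_le (hP : ∀ u v, 0 ≤ P u v ∧ P u v ≤ 1) (hD : 0 < D)
    (hPD : ∀ u v, P u v ≤ D ^ 2 / n) (r : ℝ) :
    prob P {A | ∃ z ∈ latticeBall (Fin n), ∃ w ∈ latticeBall (Fin n), 16 * D * (r + n) <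
      |centeredSum P A fun e ↦ trunc (16 * D) (z e.1 * w e.2)|} ≤ exp (36 * n - r) := by
  set L := latticeBall (Fin n)
  let E (q : (Fin n → ℤ) × (Fin n → ℤ)) : Set (Adj n) :=
    {A | 16 * D * (r + n) < centeredSum P A fun e ↦ trunc (16 * D) (q.1 e.1 * q.2 e.2)}
  have hL : (#L : ℝ) ≤ exp (18 * n) := by
    simpa only [Fintype.card_fin] using card_latticeBall_le (ι := Fin n)
  calc _ ≤ prob P (⋃ q ∈ L ×ˢ L, E q) := by
        refine prob_mono hP fun A _ ⟨z, hz, w, hw, hA⟩ ↦ ?_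
        simp only [Set.mem_iUnion, mem_product]
        obtain hA | hA := lt_abs.1 hA
        · exact ⟨(z, w), ⟨hz, hw⟩, hA⟩
        · refine ⟨(-z, w), ⟨mem_latticeBall.2 (by simpa using mem_latticeBall.1 hz), hw⟩, ?_⟩
          simpa only [E, Set.mem_ofPred_eq, Pi.neg_apply, Int.cast_neg, neg_mul, trunc_neg,
            centeredSum_neg] using hA
    _ ≤ ∑ q ∈ L ×ˢ L, prob P (E q) := prob_biUnion_le hP _ _
    _ ≤ ∑ _q ∈ L ×ˢ L, exp (-r) := sum_le_sum fun q hq ↦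
        prob_lt_centeredSum_trunc_le hP hD hPD (mem_product.1 hq).1 (mem_product.1 hq).2 r
    _ = #L * #L * exp (-r) := by rw [sum_const, card_product, nsmul_eq_mul, Nat.cast_mul]
    _ ≤ exp (18 * n) * exp (18 * n) * exp (-r) := by gcongr
    _ = exp (36 * n - r) := by
        rw [← exp_add, ← exp_add]
        ring_nf

end LightForms

section Discrepancy

variable {n : ℕ} {P : Matrix (Fin n) (Fin n) ℝ} {q : ℝ}

theorem prob_lt_card_edgeFinset_inter_le (hP : ∀ u v, 0 ≤ P u v ∧ P u v ≤ 1)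
    (hPq : ∀ u v, P u v ≤ q) (S T : Finset (Fin n)) {x : ℝ} (hx : 1 ≤ x) (r : ℝ) :
    prob P {A | exp 1 * x * (q * #S * #T) + r < (1 + log x) * #(edgeFinset A ∩ S ×ˢ T)} ≤
      exp (-r) := by
  have hmean : ∑ e ∈ pairs n, P e.1 e.2 * (exp (if e ∈ S ×ˢ T then 1 + log x else 0) - 1) ≤
      exp 1 * x * (q * #S * #T) :=
    calc ∑ e ∈ pairs n, P e.1 e.2 * (exp (if e ∈ S ×ˢ T then 1 + log x else 0) - 1)
        ≤ ∑ e ∈ pairs n, if e ∈ S ×ˢ T then exp 1 * x * q else 0 := by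
          refine sum_le_sum fun e _ ↦ ?_
          split_ifs
          · rw [exp_add, exp_log (by positivity), mul_comm]
            refine mul_le_mul (sub_le_self _ zero_le_one) (hPq _ _) (hP _ _).1 (by positivity)
          · simp
      _ ≤ ∑ e, if e ∈ S ×ˢ T then exp 1 * x * q else 0 := by
          refine sum_le_univ_sum_of_nonneg fun e ↦ ?_
          have hq : 0 ≤ q := (hP e.1 e.2).1.trans (hPq _ _)
          positivity
      _ = exp 1 * x * (q * #S * #T) := by
          rw [sum_ite_mem, univ_inter, sum_const, card_product, nsmul_eq_mul, Nat.cast_mul]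
          ring
  refine (prob_mono hP fun A _ hA ↦ ?_).trans ((prob_lt_sum_edgeFinset_le hP
    (fun e ↦ if e ∈ S ×ˢ T then 1 + log x else 0) (exp 1 * x * (q * #S * #T) + r)).trans
    (exp_le_exp.2 (by linarith)))
  rwa [Set.mem_ofPred_eq, sum_ite_mem, sum_const, nsmul_eq_mul, mul_comm (#_ : ℝ)]

theorem prob_exists_lt_card_edgeFinset_inter_le (hP : ∀ u v, 0 ≤ P u v ∧ P u v ≤ 1)
    (hPq : ∀ u v, P u v ≤ q) (S T : Finset (Fin n)) (r : ℝ) :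
    prob P {A | ∃ x, 1 ≤ x ∧
      exp 1 * x * (q * #S * #T) + r < (1 + log x) * #(edgeFinset A ∩ S ×ˢ T)} ≤ exp (-r) := by
  set E := {A : Adj n | ∃ x, 1 ≤ x ∧
    exp 1 * x * (q * #S * #T) + r < (1 + log x) * #(edgeFinset A ∩ S ×ˢ T)}
  obtain hempty | hne := E.eq_empty_or_nonempty
  · rw [hempty]
    simp only [prob, Set.indicator_empty, sum_const_zero, (exp_pos _).le]
  -- The `x` witnessing a bad graph with fewest edges in `S ×ˢ T` witnesses all bad graphs.
  obtain ⟨A₀, ⟨x, hx, hA₀⟩, hmin⟩ :=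
    E.exists_min_image (fun A ↦ #(edgeFinset A ∩ S ×ˢ T)) E.toFinite hne
  refine (prob_mono hP fun A _ hA ↦ hA₀.trans_le ?_).trans
    (prob_lt_card_edgeFinset_inter_le hP hPq S T hx r)
  have hlog := log_nonneg hx
  exact mul_le_mul_of_nonneg_left (Nat.cast_le.2 (hmin A hA)) (by linarith)

theorem exists_nonempty_of_not_hasDiscrepancy {ι : Type*} [Fintype ι] [DecidableEq ι]
    {F : Finset (ι × ι)} {p c : ℝ} (hc : 0 ≤ c) (hF : ¬HasDiscrepancy F p c) :
    ∃ S : Finset ι, S.Nonempty ∧ ∃ T : Finset ι, T.Nonempty ∧ ∃ x, 1 ≤ x ∧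
      exp 1 * x * (p * #S * #T) +
        c * (entropyBound (Fintype.card ι) #S + entropyBound (Fintype.card ι) #T) <
      (1 + log x) * #(F ∩ S ×ˢ T) := by
  simp only [HasDiscrepancy, not_forall, not_le] at hF
  obtain ⟨S, T, x, hx, hlt⟩ := hF
  have hS := entropyBound_nonneg (card_le_univ S)
  have hT := entropyBound_nonneg (card_le_univ T)
  obtain rfl | hSne := S.eq_empty_or_nonempty
  · simp only [empty_product, inter_empty, card_empty, Nat.cast_zero, mul_zero, zero_mul,
      entropyBound_zero, zero_add] at hlt
    exact absurd hlt (mul_nonneg hc hT).not_gt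
  obtain rfl | hTne := T.eq_empty_or_nonempty
  · simp only [product_empty, inter_empty, card_empty, Nat.cast_zero, mul_zero,
      entropyBound_zero, zero_add, add_zero] at hlt
    exact absurd hlt (mul_nonneg hc hS).not_gt
  exact ⟨S, hSne, T, hTne, x, hx, hlt⟩

theorem prob_not_hasDiscrepancy_le (hP : ∀ u v, 0 ≤ P u v ∧ P u v ≤ 1)
    (hPq : ∀ u v, P u v ≤ q) {c : ℝ} (hc : 1 ≤ c) :
    prob P {A | ¬HasDiscrepancy (edgeFinset A) q c} ≤ exp (-((2 * c - 4) * (1 + log n))) := by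
  let I : Finset (Finset (Fin n)) := {S | S.Nonempty}
  let E (K : Finset (Fin n) × Finset (Fin n)) : Set (Adj n) := {A | ∃ x, 1 ≤ x ∧
    exp 1 * x * (q * #K.1 * #K.2) + c * (entropyBound n #K.1 + entropyBound n #K.2) <
      (1 + log x) * #(edgeFinset A ∩ K.1 ×ˢ K.2)}
  calc _ ≤ prob P (⋃ K ∈ I ×ˢ I, E K) := by
        refine prob_mono hP fun A _ hA ↦ ?_
        obtain ⟨S, hS, T, hT, hA⟩ :=
          exists_nonempty_of_not_hasDiscrepancy (zero_le_one.trans hc) hA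
        rw [Fintype.card_fin] at hA
        exact Set.mem_iUnion₂.2 ⟨(S, T),
          mem_product.2 ⟨(mem_filter_univ S).2 hS, (mem_filter_univ T).2 hT⟩, hA⟩
    _ ≤ ∑ K ∈ I ×ˢ I, prob P (E K) := prob_biUnion_le hP _ _
    _ ≤ ∑ K ∈ I ×ˢ I, exp (-(c * entropyBound n #K.1)) * exp (-(c * entropyBound n #K.2)) := by
        refine sum_le_sum fun K _ ↦ ?_
        rw [← exp_add, ← neg_add, ← mul_add]
        exact prob_exists_lt_card_edgeFinset_inter_le hP hPq _ _ _
    _ = (∑ S ∈ I, exp (-(c * entropyBound n #S))) ^ 2 := by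
        rw [sum_product, sq, sum_mul_sum]
    _ ≤ exp (-((c - 2) * (1 + log n))) ^ 2 := by
        gcongr
        simpa only [Fintype.card_fin] using sum_exp_neg_entropyBound_le (ι := Fin n) hc
    _ = exp (-((2 * c - 4) * (1 + log n))) := by
        rw [← exp_nat_mul]
        ring_nf

end Discrepancy

section Degree

variable {n : ℕ} {A : Adj n}

theorem degree_eq_card (A : Adj n) (u : Fin n) : degree A u = #{v | A u v} := by
  simp only [degree, aVal, sum_boole]

theorem card_edgeFinset_filter_fst_le_degree (A : Adj n) (u : Fin n) :
    (#{e ∈ edgeFinset A | e.1 = u} : ℝ) ≤ degree A u := by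
  rw [degree_eq_card, Nat.cast_le]
  refine card_le_card_of_injOn Prod.snd (fun e he ↦ ?_) fun e he f hf hef ↦ ?_
  · obtain ⟨heA, rfl⟩ := mem_filter.1 he
    exact (mem_filter_univ _).2 (mem_edgeFinset.1 heA).2
  · exact Prod.ext ((mem_filter.1 he).2.trans (mem_filter.1 hf).2.symm) hef

theorem card_edgeFinset_filter_snd_le_degree (hA : IsSimple A) (v : Fin n) :
    (#{e ∈ edgeFinset A | e.2 = v} : ℝ) ≤ degree A v := by
  rw [degree_eq_card, Nat.cast_le]
  refine card_le_card_of_injOn Prod.fst (fun e he ↦ ?_) fun e he f hf hef ↦ ?_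
  · obtain ⟨heA, rfl⟩ := mem_filter.1 he
    exact (mem_filter_univ _).2 (hA.2 e.1 e.2 ▸ (mem_edgeFinset.1 heA).2)
  · exact Prod.ext hef ((mem_filter.1 he).2.trans (mem_filter.1 hf).2.symm)

end Degree

section Forms

variable {n : ℕ} {P : Matrix (Fin n) (Fin n) ℝ} {A : Adj n}

theorem sum_sum_eq_sum_pairs (g : Fin n → Fin n → ℝ) :
    ∑ u, ∑ v, g u v = ∑ e ∈ pairs n, g e.1 e.2 + ∑ e ∈ pairs n, g e.2 e.1 + ∑ u, g u u := by
  have hsplit (u v : Fin n) : g u v = (if u < v then g u v else 0) + (if v < u then g u v else 0) +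
      (if u = v then g u v else 0) := by
    obtain h | rfl | h := lt_trichotomy u v
    · simp [h, h.ne, h.not_gt]
    · simp
    · simp [h, h.ne', h.not_gt]
  simp only [pairs, sum_filter, Fintype.sum_prod_type]
  rw [sum_comm (f := fun u v ↦ if u < v then g v u else 0)]
  simp only [← sum_add_distrib]
  refine sum_congr rfl fun u _ ↦ (sum_congr rfl fun v _ ↦ hsplit u v).trans ?_
  simp only [sum_add_distrib, sum_ite_eq, mem_univ, if_true]

theorem centeredSum_eq_sum_pairs (P : Matrix (Fin n) (Fin n) ℝ) (A : Adj n)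
    (c : Fin n × Fin n → ℝ) :
    centeredSum P A c = ∑ e ∈ pairs n, (adjMat A - P) e.1 e.2 * c e := by
  rw [centeredSum, edgeFinset, sum_filter, ← sum_sub_distrib]
  refine sum_congr rfl fun e _ ↦ ?_
  rw [Matrix.sub_apply, adjMat, aVal]
  split_ifs <;> ring

theorem sum_adjMat_sub_mul (hA : IsSimple A) (hPsymm : ∀ u v, P u v = P v u) (z w : Fin n → ℝ) :
    ∑ u, ∑ v, (adjMat A - P) u v * (z u * w v) =
      centeredSum P A (fun e ↦ z e.1 * w e.2) + centeredSum P A (fun e ↦ w e.1 * z e.2) -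
        ∑ u, P u u * (z u * w u) := by
  have hsymm (u v : Fin n) : (adjMat A - P) v u = (adjMat A - P) u v := by
    rw [Matrix.sub_apply, Matrix.sub_apply, adjMat, adjMat, aVal, aVal, hA.2, hPsymm]
  have hdiag (u : Fin n) : (adjMat A - P) u u = -P u u := by
    rw [Matrix.sub_apply, adjMat, aVal, hA.1, if_neg Bool.false_ne_true, zero_sub]
  rw [sum_sum_eq_sum_pairs, centeredSum_eq_sum_pairs, centeredSum_eq_sum_pairs]
  simp only [hdiag, neg_mul, sum_neg_distrib, ← sub_eq_add_neg, mul_comm (w _)]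
  simp only [fun e : Fin n × Fin n ↦ hsymm e.1 e.2]

theorem abs_centeredSum_le (hP : ∀ u v, 0 ≤ P u v) (A : Adj n) (f g : Fin n × Fin n → ℝ) :
    |centeredSum P A f| ≤ |centeredSum P A g| + ∑ e ∈ edgeFinset A, |f e - g e| +
      ∑ e ∈ pairs n, P e.1 e.2 * |f e - g e| := by
  have hfg : centeredSum P A f = centeredSum P A g + ∑ e ∈ edgeFinset A, (f e - g e) -
      ∑ e ∈ pairs n, P e.1 e.2 * (f e - g e) := by
    simp only [centeredSum, mul_sub, sum_sub_distrib]
    ring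
  rw [hfg]
  refine (abs_sub _ _).trans (add_le_add ((abs_add_le _ _).trans ?_) ?_)
  · exact add_le_add_right (abs_sum_le_sum_abs _ _) _
  · refine (abs_sum_le_sum_abs _ _).trans_eq (sum_congr rfl fun e _ ↦ ?_)
    rw [abs_mul, abs_of_nonneg (hP _ _)]

theorem piecewise_zero_mem_latticeBall {ι : Type*} [Fintype ι] [DecidableEq ι] (J : Finset ι)
    {z : ι → ℤ} (hz : z ∈ latticeBall ι) : J.piecewise z 0 ∈ latticeBall ι := by
  rw [mem_latticeBall] at hz ⊢
  refine (sum_le_sum fun u _ ↦ ?_).trans hz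
  by_cases hu : u ∈ J
  · rw [piecewise_eq_of_mem _ _ _ hu]
  · rw [piecewise_eq_of_notMem _ _ _ hu, Pi.zero_apply, Int.cast_zero, zero_pow two_ne_zero]
    positivity

theorem restrictM_mul_eq (M : Matrix (Fin n) (Fin n) ℝ) (J : Finset (Fin n)) (z w : Fin n → ℤ)
    (u v : Fin n) :
    restrictM M J u v * (z u * w v : ℝ) =
      M u v * (J.piecewise z 0 u * J.piecewise w 0 v : ℝ) := by
  by_cases hu : u ∈ J <;> by_cases hv : v ∈ J <;> simp [restrictM, hu, hv]

theorem abs_sum_mul_mul_le {ι : Type*} [Fintype ι] {a : ι → ℝ} {D : ℝ} (ha : ∀ u, |a u| ≤ D)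
    {z w : ι → ℤ} (hz : z ∈ latticeBall ι) (hw : w ∈ latticeBall ι) :
    |∑ u, a u * (z u * w u : ℝ)| ≤ D * (16 * Fintype.card ι) := by
  obtain _ | ⟨⟨u⟩⟩ := isEmpty_or_nonempty ι
  · simp
  have hD : 0 ≤ D := (abs_nonneg _).trans (ha u)
  rw [mem_latticeBall] at hz hw
  have hmul (u : ι) : |(z u * w u : ℝ)| ≤ ((z u : ℝ) ^ 2 + (w u : ℝ) ^ 2) / 2 := by
    rw [abs_mul, le_div_iff₀' two_pos, ← sq_abs, ← sq_abs (w u : ℝ), ← mul_assoc]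
    exact two_mul_le_add_sq _ _
  calc |∑ u, a u * (z u * w u : ℝ)| ≤ ∑ u, |a u * (z u * w u : ℝ)| := abs_sum_le_sum_abs _ _
    _ ≤ ∑ u, D * (((z u : ℝ) ^ 2 + (w u : ℝ) ^ 2) / 2) := by
        refine sum_le_sum fun u _ ↦ ?_
        rw [abs_mul]
        exact mul_le_mul (ha u) (hmul u) (abs_nonneg _) hD
    _ = D * ((∑ u, (z u : ℝ) ^ 2 + ∑ u, (w u : ℝ) ^ 2) / 2) := by
        rw [← mul_sum, ← sum_div, sum_add_distrib]
    _ ≤ D * (16 * Fintype.card ι) := by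
        gcongr
        linarith

end Forms

section Deterministic

variable {n : ℕ} [NeZero n] {P : Matrix (Fin n) (Fin n) ℝ} {A : Adj n} {D L c : ℝ}

theorem sum_pairs_mul_abs_sub_trunc_le (hP : ∀ u v, 0 ≤ P u v) (hD : 0 < D)
    (hPD : ∀ u v, P u v ≤ D ^ 2 / n) {z w : Fin n → ℤ} (hz : z ∈ latticeBall (Fin n))
    (hw : w ∈ latticeBall (Fin n)) :
    ∑ e ∈ pairs n, P e.1 e.2 * |(z e.1 * w e.2 : ℝ) - trunc (16 * D) (z e.1 * w e.2)| ≤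
      16 * (n * D) := by
  refine le_of_mul_le_mul_left ?_ (by positivity : 0 < 16 * D)
  calc _ = ∑ e ∈ pairs n, P e.1 e.2 *
          (16 * D * |(z e.1 * w e.2 : ℝ) - trunc (16 * D) (z e.1 * w e.2)|) := by
        rw [mul_sum]
        exact sum_congr rfl fun e _ ↦ mul_left_comm _ _ _
    _ ≤ ∑ e ∈ pairs n, P e.1 e.2 * (z e.1 * w e.2 : ℝ) ^ 2 :=
        sum_le_sum fun e _ ↦ mul_le_mul_of_nonneg_left mul_abs_sub_trunc_le (hP _ _)
    _ ≤ D ^ 2 / n * (16 * n) ^ 2 := sum_pairs_mul_sq_le (by positivity) hPD hz hw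
    _ = 16 * D * (16 * (n * D)) := by
        field_simp [NeZero.ne n]

theorem abs_centeredSum_mul_le (hP : ∀ u v, 0 ≤ P u v) (hD : 0 < D)
    (hPD : ∀ u v, P u v ≤ D ^ 2 / n) (hc : 0 ≤ c) (hA : IsSimple A)
    (hF : HasDiscrepancy (edgeFinset A) (D ^ 2 / n) c) {z w : Fin n → ℤ}
    (hz : z ∈ latticeBall (Fin n)) (hw : w ∈ latticeBall (Fin n))
    (hzA : ∀ u, z u ≠ 0 → degree A u ≤ D ^ 2) (hwA : ∀ u, w u ≠ 0 → degree A u ≤ D ^ 2)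
    (hL : |centeredSum P A fun e ↦ trunc (16 * D) (z e.1 * w e.2)| ≤ L) :
    |centeredSum P A fun e ↦ (z e.1 * w e.2 : ℝ)| ≤ L + (3344 + 2176 * c) * (n * D) := by
  have hheavy := sum_heavy_le (θ := 16 * D) hD hc (by linarith)
    (by rwa [Fintype.card_fin]) hz hw
    (fun u hu ↦ (card_edgeFinset_filter_fst_le_degree A u).trans (hzA u hu))
    (fun v hv ↦ (card_edgeFinset_filter_snd_le_degree hA v).trans (hwA v hv))
  rw [Fintype.card_fin] at hheavy
  have hmean := sum_pairs_mul_abs_sub_trunc_le hP hD hPD hz hw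
  linarith [abs_centeredSum_le hP A (fun e ↦ (z e.1 * w e.2 : ℝ))
    fun e ↦ trunc (16 * D) (z e.1 * w e.2)]

theorem opNorm_restrictM_le (hP : ∀ u v, 0 ≤ P u v) (hPsymm : ∀ u v, P u v = P v u) (hD : 0 < D)
    (hPD : ∀ u v, P u v ≤ D ^ 2 / n) (hdiag : ∀ u, P u u ≤ D) (hc : 0 ≤ c) (hA : IsSimple A)
    (hF : HasDiscrepancy (edgeFinset A) (D ^ 2 / n) c)
    (hL : ∀ z ∈ latticeBall (Fin n), ∀ w ∈ latticeBall (Fin n),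
      |centeredSum P A fun e ↦ trunc (16 * D) (z e.1 * w e.2)| ≤ L * (n * D))
    {J : Finset (Fin n)} (hJ : ∀ u ∈ J, degree A u ≤ D ^ 2) :
    opNorm (restrictM (adjMat A - P) J) ≤ (L / 4 + 838 + 544 * c) * D := by
  have hsupp (x : Fin n → ℤ) (u : Fin n) (hu : J.piecewise x 0 u ≠ 0) : degree A u ≤ D ^ 2 :=
    hJ u (by_contra fun huJ ↦ hu (piecewise_eq_of_notMem _ _ _ huJ))
  have hb : (L / 4 + 838 + 544 * c) * D = (2 * (L + 3344 + 2176 * c) + 16) * D / 8 := by ring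
  rw [hb]
  refine opNorm_le_of_forall_latticeBall fun z hz w hw ↦ ?_
  have hz' := piecewise_zero_mem_latticeBall J hz
  have hw' := piecewise_zero_mem_latticeBall J hw
  simp only [restrictM_mul_eq]
  rw [sum_adjMat_sub_mul hA hPsymm (fun u ↦ (J.piecewise z 0 u : ℝ)) fun u ↦ J.piecewise w 0 u]
  have hupper := abs_centeredSum_mul_le hP hD hPD hc hA hF hz' hw' (hsupp z) (hsupp w)
    (hL _ hz' _ hw')
  have hlower := abs_centeredSum_mul_le hP hD hPD hc hA hF hw' hz' (hsupp w) (hsupp z)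
    (hL _ hw' _ hz')
  have hdiag' := abs_sum_mul_mul_le (a := fun u ↦ P u u) (D := D)
    (fun u ↦ (abs_of_nonneg (hP u u)).trans_le (hdiag u)) hz' hw'
  rw [Fintype.card_fin] at hdiag'
  linarith [le_of_abs_le hupper, le_of_abs_le hlower, neg_le_of_abs_le hdiag']

end Deterministic

section HighProbability

theorem exp_neg_mul_one_add_log_le {x a : ℝ} (hx : 1 ≤ x) (ha : 0 ≤ a) :
    exp (-((a + 1) * (1 + log x))) ≤ x ^ (-a) / 2 := by
  have hx₀ : 0 < x := one_pos.trans_le hx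
  calc exp (-((a + 1) * (1 + log x))) ≤ exp (log x * -a + -1) :=
        exp_le_exp.2 (by linarith [log_nonneg hx])
    _ = x ^ (-a) * exp (-1) := by rw [exp_add, ← rpow_def_of_pos hx₀]
    _ ≤ x ^ (-a) * 2⁻¹ := by
        gcongr
        linarith [exp_neg_one_lt_d9]
    _ = x ^ (-a) / 2 := (div_eq_mul_inv _ _).symm

variable {n : ℕ} {P : Matrix (Fin n) (Fin n) ℝ} {D τ C' : ℝ}

theorem prob_not_hasDiscrepancy_or_light_le [NeZero n] (hP : ∀ u v, 0 ≤ P u v ∧ P u v ≤ 1)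
    (hD : 0 < D) (hPD : ∀ u v, P u v ≤ D ^ 2 / n) (hC' : 0 ≤ C') :
    prob P ({A | ¬HasDiscrepancy (edgeFinset A) (D ^ 2 / n) ((C' + 5) / 2)} ∪
      {A | ∃ z ∈ latticeBall (Fin n), ∃ w ∈ latticeBall (Fin n), 16 * D * ((37 + C') * n + n) <
        |centeredSum P A fun e ↦ trunc (16 * D) (z e.1 * w e.2)|}) ≤ n ^ (-C') := by
  have hn : (1 : ℝ) ≤ n := Nat.one_le_cast.2 NeZero.one_le
  have hlog : 1 + log n ≤ n := by linarith [log_le_sub_one_of_pos (one_pos.trans_le hn)]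
  have hdisc : prob P {A | ¬HasDiscrepancy (edgeFinset A) (D ^ 2 / n) ((C' + 5) / 2)} ≤
      n ^ (-C') / 2 := by
    refine (prob_not_hasDiscrepancy_le hP hPD (by linarith)).trans
      (le_of_eq_of_le ?_ (exp_neg_mul_one_add_log_le hn hC'))
    ring_nf
  have hlight := (prob_exists_lt_abs_centeredSum_trunc_le hP hD hPD ((37 + C') * n)).trans <|
    calc exp (36 * n - (37 + C') * n) = exp (-((C' + 1) * n)) := by ring_nf
      _ ≤ exp (-((C' + 1) * (1 + log n))) := by gcongr
      _ ≤ n ^ (-C') / 2 := exp_neg_mul_one_add_log_le hn hC'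
  exact (prob_union_le hP _ _).trans ((add_le_add hdisc hlight).trans_eq (add_halves _))

theorem one_sub_rpow_le_prob_opNorm_restrictM_le [NeZero n] (hP : ∀ u v, 0 ≤ P u v ∧ P u v ≤ 1)
    (hPsymm : ∀ u v, P u v = P v u) (hD : 0 < D) (hPD : ∀ u v, P u v ≤ D ^ 2 / n)
    (hτ : τ ≤ D ^ 2) (hC' : 0 ≤ C') :
    1 - (n : ℝ) ^ (-C') ≤ prob P {A | opNorm (restrictM (adjMat A - P) {u | degree A u ≤ τ}) ≤
      (2350 + 276 * C') * D} := by
  have hdiag (u : Fin n) : P u u ≤ D := by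
    refine le_of_sq_le_sq ?_ hD.le
    calc P u u ^ 2 ≤ P u u := pow_le_of_le_one (hP u u).1 (hP u u).2 two_ne_zero
      _ ≤ D ^ 2 / n := hPD u u
      _ ≤ D ^ 2 := div_le_self (sq_nonneg D) (Nat.one_le_cast.2 NeZero.one_le)
  rw [← one_sub_prob_compl]
  refine sub_le_sub_left ((prob_mono hP fun A hA hbad ↦ ?_).trans
    (prob_not_hasDiscrepancy_or_light_le hP hD hPD hC')) 1
  contrapose! hbad
  simp only [Set.mem_union, Set.mem_ofPred_eq, not_or, not_not, not_exists, not_and, not_lt] at hbad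
  refine Set.notMem_compl_iff.2 ?_
  refine (opNorm_restrictM_le (L := 16 * (38 + C')) (fun u v ↦ (hP u v).1) hPsymm hD hPD hdiag
    (by linarith) hA hbad.1 (fun z hz w hw ↦ (hbad.2 z hz w hw).trans_eq (by ring))
    fun u hu ↦ ((mem_filter_univ u).1 hu).trans hτ).trans_eq ?_
  ring

end HighProbability

theorem opNorm_of_dim_zero (M : Matrix (Fin 0) (Fin 0) ℝ) : opNorm M = 0 := by
  have hempty : {t : ℝ | ∃ x : Fin 0 → ℝ, sqnorm x = 1 ∧ t = sqnorm (M.mulVec x)} = ∅ :=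
    Set.eq_empty_of_forall_notMem fun t ⟨x, hx, _⟩ ↦ by simp [sqnorm] at hx
  rw [opNorm, hempty, sSup_empty]

theorem add_le_sqrt_add_sqrt_sq {x y : ℝ} (hx : 0 ≤ x) (hy : 0 ≤ y) : x + y ≤ (√x + √y) ^ 2 := by
  rw [add_sq, sq_sqrt hx, sq_sqrt hy, add_right_comm]
  exact le_add_of_nonneg_right (by positivity)

section Pmax

variable {n : ℕ} {P : Matrix (Fin n) (Fin n) ℝ}

theorem le_pmax (P : Matrix (Fin n) (Fin n) ℝ) (u v : Fin n) : P u v ≤ pmax P := by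
  refine le_csSup ((Set.finite_range (Function.uncurry P)).bddAbove.mono ?_) ⟨u, v, rfl⟩
  rintro _ ⟨u, v, rfl⟩
  exact ⟨(u, v), rfl⟩

theorem pmax_nonneg (hP : ∀ u v, 0 ≤ P u v) : 0 ≤ pmax P :=
  sSup_nonneg fun _ ⟨u, v, h⟩ ↦ h ▸ hP u v

end Pmax

end

/-- Lemma 9 (operator norm bound on the low-degree block of `A − P`). -/
theorem statement_18 (C' : ℝ) (hC' : 0 < C') :
    ∃ C : ℝ, 0 < C ∧
      ∀ (n : ℕ) (P : Matrix (Fin n) (Fin n) ℝ) (τ : ℝ), 0 < τ →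
        (∀ u v, P u v = P v u) → (∀ u v, 0 ≤ P u v ∧ P u v ≤ 1) →
        1 - (n : ℝ) ^ (-C') ≤ prob P
          { A | opNorm (restrictM (adjMat A - P)
                (Finset.univ.filter fun u => degree A u ≤ τ)) ≤
              C * (Real.sqrt ((n : ℝ) * pmax P) + Real.sqrt τ +
                (n : ℝ) * pmax P /
                  (Real.sqrt τ + Real.sqrt ((n : ℝ) * pmax P))) } := by
  refine ⟨2350 + 276 * C', by positivity, fun n P τ hτ hPsymm hP ↦ ?_⟩
  have hpmax : 0 ≤ n * pmax P := mul_nonneg n.cast_nonneg (pmax_nonneg fun u v ↦ (hP u v).1)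
  set D := √(n * pmax P) + √τ
  have hDsq : n * pmax P + τ ≤ D ^ 2 := add_le_sqrt_add_sqrt_sq hpmax hτ.le
  have hle : (2350 + 276 * C') * D ≤
      (2350 + 276 * C') * (D + n * pmax P / (√τ + √(n * pmax P))) := by
    gcongr
    exact le_add_of_nonneg_right (by positivity)
  obtain rfl | hn := n.eq_zero_or_pos
  · simp only [opNorm_of_dim_zero, (by positivity : 0 ≤ (2350 + 276 * C') * D).trans hle,
      Set.ofPred_true, prob_univ]
    exact sub_le_self _ (by positivity)
  · have : NeZero n := ⟨hn.ne'⟩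
    have hPD (u v : Fin n) : P u v ≤ D ^ 2 / n := by
      rw [le_div_iff₀' (by positivity)]
      exact (mul_le_mul_of_nonneg_left (le_pmax P u v) n.cast_nonneg).trans (by linarith)
    exact (one_sub_rpow_le_prob_opNorm_restrictM_le hP hPsymm (by positivity) hPD
      (by linarith) hC'.le).trans (prob_mono hP fun A _ hA ↦ le_trans hA hle)

end SBM
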